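/- Let p and q be primes satisfying conditions (1). Then the 2-class group of the triquadratic field F_pq = Q(√(2p), √(2q), √(-2)) is isomorphic to Z/2Z × Z/2Z. -/

import Mathlib

/-!
Put `s = √-2`, `t = √-q`, `r = √-p` and `L = ℚ(s, t)`. Then `F = L(r)`, and the class number `n` of
`L` is odd: in both steps of the tower `ℚ ⊂ ℚ(s) ⊂ L` the only ramified prime of the upper field is
principal, and the units that are norms are norms of units.

The units of `L` are generated up to squares by `-1` and `η = y t - x s`, with `2 x² - q y² = 1`.
As `-1` is the norm of a unit of `F` and `±η` is not the norm of any element of `F` (norms to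
`ℚ(s t) ⊂ ℚ_p` would give a nontrivial solution of `X² + p Y² = 2 Z²` in `ℚ_p`), every unit of `L`
that is a norm from `F` is the norm of a unit. Hence, by Hilbert 90, every class of order two in
`F` contains an ideal fixed by `Gal(F/L)`, that is, a product of ideals coming from `L` and of
ramified primes, which lie over `p` and `2`. The relations between these primes given by `r` and by
`1 + (b t - a r) / s`, where `p a² - q b² = -2`, show that the classes of order two are among the
products of `[P]ⁿ` and `[T]ⁿ`, with `P` of norm `p²` and `T` of norm `2`.

None of `[P]`, `[T]` and `[P T]` is a square. Indeed, let `K` be a subfield with odd class number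
and no units besides squares and their negatives. If `I` has square class and relative norm `(a)`,
then `a` or `-a` is up to squares a norm from `F`, hence of the form `X² + p Y²` and `X² + 2 Y²`.
Over `ℝ`, `ℚ_p` or `ℚ_2` this fails, if `K = ℚ(t)` in the case of `P` and `K = ℚ` in the others. So
the group has no elements of order four and exactly four elements of order at most two.
-/

noncomputable section

open IntermediateField NumberField

/-- Conditions (1). -/
def Cond1 (p q : ℕ) : Prop :=
  p.Prime ∧ q.Prime ∧ p % 4 = 1 ∧ q % 4 = 3 ∧
    jacobiSym 2 p = -1 ∧ jacobiSym 2 q = 1 ∧ jacobiSym (p : ℤ) q = -1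

/-- The triquadratic field `F_pq = ℚ(√(2p), √(2q), √(-2))` as a subfield of `ℂ`,
where `√(-2) = i√2`. -/
def Ff (p q : ℕ) : IntermediateField ℚ ℂ :=
  adjoin ℚ {((Real.sqrt (2 * p) : ℝ) : ℂ), ((Real.sqrt (2 * q) : ℝ) : ℂ),
    Complex.I * ((Real.sqrt 2 : ℝ) : ℂ)}

/-! ### Pell equations -/

lemma exists_eq_mul_sq_of_coprime_of_mul_eq {a b d z : ℕ} (hd : d ≠ 0) (hab : a.Coprime b)
    (h : a * b = d * z ^ 2) :
    ∃ d₁ d₂ m n : ℕ, d₁ * d₂ = d ∧ a = d₁ * m ^ 2 ∧ b = d₂ * n ^ 2 := by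
  have hgcd : d.gcd a * d.gcd b = d := by
    rw [← hab.gcd_mul d, Nat.gcd_eq_left (h ▸ dvd_mul_right d _)]
  obtain ⟨u, hu⟩ := d.gcd_dvd_right a
  obtain ⟨v, hv⟩ := d.gcd_dvd_right b
  have huv : u * v = z ^ 2 := Nat.eq_of_mul_eq_mul_left hd.bot_lt <| by
    calc d * (u * v) = d.gcd a * d.gcd b * (u * v) := by rw [hgcd]
      _ = d.gcd a * u * (d.gcd b * v) := by ring
      _ = d * z ^ 2 := by rw [← hu, ← hv, h]
  have hco : u.Coprime v :=
    (hab.coprime_dvd_left ⟨_, hu.trans (mul_comm _ _)⟩).coprime_dvd_right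
      ⟨_, hv.trans (mul_comm _ _)⟩
  obtain ⟨m, rfl⟩ := exists_eq_pow_of_mul_eq_pow (Nat.isUnit_iff.2 hco) huv
  obtain ⟨n, rfl⟩ := exists_eq_pow_of_mul_eq_pow (Nat.isUnit_iff.2 hco.symm)
    ((mul_comm _ _).trans huv)
  exact ⟨_, _, m, n, hgcd, hu, hv⟩

lemma exists_pell_isFundamental {d : ℕ} (hd : ¬ IsSquare d) :
    ∃ x y : ℕ, 1 < x ∧ 0 < y ∧ x ^ 2 = d * y ^ 2 + 1 ∧
      ∀ x' y' : ℕ, 1 < x' → x' ^ 2 = d * y' ^ 2 + 1 → x ≤ x' := by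
  have hd0 : 0 < d := Nat.pos_of_ne_zero fun h => hd (h ▸ ⟨0, rfl⟩)
  obtain ⟨a, hx, hy, hmin⟩ :=
    Pell.IsFundamental.exists_of_not_isSquare (d := d) (mod_cast hd0) (by simpa using hd)
  have hxy := a.prop
  lift a.x to ℕ using by lia with x hax
  lift a.y to ℕ using by lia with y hay
  refine ⟨x, y, mod_cast hx, mod_cast hy, by zify; linarith, fun x' y' hx' hxy' => ?_⟩
  have hxy'' : (x' : ℤ) ^ 2 - d * y' ^ 2 = 1 := by zify at hxy'; linarith
  have hle := hmin (b := Pell.Solution₁.mk x' y' hxy'') (by simpa using hx')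
  simpa using hle

/-- Factor `x² - 1 = dy²` for the fundamental solution of the Pell equation: as `(x - 1) / 2` and
`(x + 1) / 2` are coprime if `x` is odd, and `x - 1` and `x + 1` if `x` is even, both factors are
squares up to divisors of `d`; minimality of `x` excludes `d₂ = 1` in the first case. -/
lemma exists_mul_sq_add_one_or_add_two {d : ℕ} (hd : Squarefree d) (hd1 : d ≠ 1) :
    ∃ d₁ d₂ m n : ℕ, d₁ * d₂ = d ∧
      (d₂ ≠ 1 ∧ d₁ * m ^ 2 + 1 = d₂ * n ^ 2 ∨ Odd d ∧ d₁ * m ^ 2 + 2 = d₂ * n ^ 2) := by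
  have hsq : ¬ IsSquare d := by
    rintro ⟨r, rfl⟩
    exact hd1 (by simp [Nat.isUnit_iff.1 (hd r dvd_rfl)])
  obtain ⟨x, y, hx, hy, hxy, hmin⟩ := exists_pell_isFundamental hsq
  rcases Nat.even_or_odd' x with ⟨u, rfl | rfl⟩
  · have hodd : Odd (d * y ^ 2) := by grind
    obtain ⟨v, rfl⟩ : ∃ v, u = v + 1 := ⟨u - 1, by lia⟩
    obtain ⟨d₁, d₂, m, n, h, h₁, h₂⟩ := exists_eq_mul_sq_of_coprime_of_mul_eq hd.ne_zero
      (a := 2 * v + 1) (b := 2 * v + 1 + 2) (z := y) (by simp) (by linarith)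
    exact ⟨d₁, d₂, m, n, h, .inr ⟨Nat.Odd.of_mul_left hodd, by rw [← h₁, h₂]⟩⟩
  · have hye : Even y := by
      by_contra hyo
      have h8 : 8 ∣ d * y ^ 2 := by
        simpa [hxy] using Nat.eight_dvd_sq_sub_one_of_odd ⟨u, rfl⟩
      have hco : Nat.Coprime 8 (y ^ 2) :=
        (Nat.coprime_two_left.2 (Nat.not_even_iff_odd.1 hyo)).pow 3 2
      have := Nat.isUnit_iff.1 (hd 2 ((by decide : 2 * 2 ∣ 8).trans (hco.dvd_of_dvd_mul_right h8)))
      lia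
    obtain ⟨z, rfl⟩ := even_iff_exists_two_mul.1 hye
    obtain ⟨d₁, d₂, m, n, h, h₁, h₂⟩ := exists_eq_mul_sq_of_coprime_of_mul_eq hd.ne_zero
      (a := u) (b := u + 1) (z := z) (by simp) (by linarith)
    refine ⟨d₁, d₂, m, n, h, .inl ⟨?_, by rw [← h₁, h₂]⟩⟩
    rintro rfl
    have hn : n ^ 2 = d * m ^ 2 + 1 := by simp_all
    have := hmin n m (by nlinarith) hn
    nlinarith

lemma mul_eq_mul_primes_iff {p q a b : ℕ} (hp : p.Prime) (hq : q.Prime) :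
    a * b = p * q ↔
      a = 1 ∧ b = p * q ∨ a = p * q ∧ b = 1 ∨ a = p ∧ b = q ∨ a = q ∧ b = p := by
  refine ⟨fun h => ?_, by rintro (⟨rfl, rfl⟩ | ⟨rfl, rfl⟩ | ⟨rfl, rfl⟩ | ⟨rfl, rfl⟩) <;> ring⟩
  rcases hp.dvd_mul.1 (h ▸ dvd_mul_right p q) with ⟨c, rfl⟩ | ⟨c, rfl⟩
  · have hc : c * b = q := Nat.eq_of_mul_eq_mul_left hp.pos (by linarith)
    rcases Nat.prime_mul_iff.1 (hc ▸ hq) with ⟨-, rfl⟩ | ⟨-, rfl⟩ <;> simp_all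
  · have hc : a * c = q := Nat.eq_of_mul_eq_mul_left hp.pos (by linarith)
    rcases Nat.prime_mul_iff.1 (hc ▸ hq) with ⟨-, rfl⟩ | ⟨-, rfl⟩ <;> simp_all

lemma squarefree_mul_primes {p q : ℕ} (hp : p.Prime) (hq : q.Prime) (hpq : p ≠ q) :
    Squarefree (p * q) :=
  (Nat.squarefree_mul ((Nat.coprime_primes hp hq).2 hpq)).2
    ⟨hp.prime.squarefree, hq.prime.squarefree⟩

lemma mul_primes_ne_one {p q : ℕ} (hp : p.Prime) : p * q ≠ 1 := fun h =>
  hp.ne_one (Nat.eq_one_of_mul_eq_one_right h)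

lemma not_isSquare_rat_mul_primes {p q : ℕ} (hp : p.Prime) (hq : q.Prime) (hpq : p ≠ q) :
    ¬ IsSquare (p * q : ℚ) := by
  rw [← Nat.cast_mul, Rat.isSquare_natCast_iff]
  rintro ⟨k, hk⟩
  have hk1 := Nat.isUnit_iff.1 (squarefree_mul_primes hp hq hpq k hk.symm.dvd)
  exact mul_primes_ne_one hp (by rw [hk, hk1])

lemma not_dvd_sq_sub_of_not_isSquare {n : ℕ} {a : ℤ} (h : ¬ IsSquare (a : ZMod n)) (x : ℤ) :
    ¬ (n : ℤ) ∣ x ^ 2 - a := fun hdvd =>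
  h ⟨x, by rw [← sq, ← Int.cast_pow]; exact (ZMod.intCast_eq_intCast_iff_dvd_sub _ _ _).2 hdvd⟩

lemma isSquare_mul_iff_of_isSquare {k : Type*} [Field k] {a b : k} (ha : IsSquare a)
    (ha0 : a ≠ 0) : IsSquare (a * b) ↔ IsSquare b :=
  ⟨fun h => by simpa only [inv_mul_cancel_left₀ ha0] using ha.inv.mul h, ha.mul⟩

lemma not_isSquare_two_of_mod_eight_eq_five {p : ℕ} [Fact p.Prime] (hp8 : p % 8 = 5) :
    ¬ IsSquare ((2 : ℤ) : ZMod p) := by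
  simp [ZMod.exists_sq_eq_two_iff (show p ≠ 2 by lia), hp8]

lemma not_isSquare_neg_two_of_mod_eight {p : ℕ} [Fact p.Prime] (hp8 : p % 8 = 5 ∨ p % 8 = 7) :
    ¬ IsSquare ((-2 : ℤ) : ZMod p) := by
  push_cast
  rw [ZMod.exists_sq_eq_neg_two_iff (by lia)]
  lia

lemma not_isSquare_neg_one_of_mod_four_eq_three {p : ℕ} [Fact p.Prime] (hp4 : p % 4 = 3) :
    ¬ IsSquare ((-1 : ℤ) : ZMod p) := by
  push_cast
  rw [ZMod.exists_sq_eq_neg_one_iff]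
  lia

section

variable {p q : ℕ}

lemma exists_sq_sub_two_mul_sq_eq_neg_one (hp : p.Prime) (hp8 : p % 8 = 5) :
    ∃ e f : ℤ, e ^ 2 - 2 * p * f ^ 2 = -1 := by
  have := Fact.mk hp
  obtain ⟨d₁, d₂, m, n, hd, ⟨hd₂, h⟩ | ⟨hodd, -⟩⟩ := exists_mul_sq_add_one_or_add_two
    (squarefree_mul_primes Nat.prime_two hp (by lia)) (mul_primes_ne_one Nat.prime_two)
  · obtain ⟨rfl, rfl⟩ | ⟨-, rfl⟩ | ⟨rfl, rfl⟩ | ⟨rfl, rfl⟩ :=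
      (mul_eq_mul_primes_iff Nat.prime_two hp).1 hd <;> zify at h
    · exact ⟨m, n, by linarith⟩
    · exact absurd rfl hd₂
    · exact absurd ⟨2 * n ^ 2, by linarith⟩ (not_dvd_sq_sub_of_not_isSquare
        (not_isSquare_neg_two_of_mod_eight (.inl hp8)) (2 * m))
    · exact absurd ⟨2 * m ^ 2, by linarith⟩ (not_dvd_sq_sub_of_not_isSquare
        (not_isSquare_two_of_mod_eight_eq_five hp8) (2 * n))
  · exact absurd hodd (by simp)

lemma exists_two_mul_sq_sub_mul_sq_eq_one (hq : q.Prime) (hq8 : q % 8 = 7) :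
    ∃ x y : ℤ, 2 * x ^ 2 - q * y ^ 2 = 1 := by
  have := Fact.mk hq
  obtain ⟨d₁, d₂, m, n, hd, ⟨hd₂, h⟩ | ⟨hodd, -⟩⟩ := exists_mul_sq_add_one_or_add_two
    (squarefree_mul_primes Nat.prime_two hq (by lia)) (mul_primes_ne_one Nat.prime_two)
  · obtain ⟨rfl, rfl⟩ | ⟨-, rfl⟩ | ⟨rfl, rfl⟩ | ⟨rfl, rfl⟩ :=
      (mul_eq_mul_primes_iff Nat.prime_two hq).1 hd <;> zify at h
    · exact absurd ⟨2 * n ^ 2, by linarith⟩ (not_dvd_sq_sub_of_not_isSquare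
        (not_isSquare_neg_one_of_mod_four_eq_three (p := q) (by lia)) m)
    · exact absurd rfl hd₂
    · exact absurd ⟨2 * n ^ 2, by linarith⟩ (not_dvd_sq_sub_of_not_isSquare
        (not_isSquare_neg_two_of_mod_eight (.inr hq8)) (2 * m))
    · exact ⟨n, m, by linarith⟩
  · exact absurd hodd (by simp)

lemma exists_mul_sq_sub_mul_sq_eq_neg_two (hp : p.Prime) (hp8 : p % 8 = 5) (hq : q.Prime)
    (hq8 : q % 8 = 7) (hpq : ¬ IsSquare (p : ZMod q)) :
    ∃ a b : ℤ, p * a ^ 2 - q * b ^ 2 = -2 := by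
  have := Fact.mk hp
  have := Fact.mk hq
  have hq2 : q ≠ 2 := by lia
  have hqp : ¬ IsSquare ((q : ℤ) : ZMod p) := by
    simpa [ZMod.exists_sq_eq_prime_iff_of_mod_four_eq_one (p := p) (q := q) (by lia) hq2] using hpq
  have hneg_qp : ¬ IsSquare ((-q : ℤ) : ZMod p) := by
    have hneg_one : IsSquare (-1 : ZMod p) := by rw [ZMod.exists_sq_eq_neg_one_iff]; lia
    rw [Int.cast_neg, neg_eq_neg_one_mul, isSquare_mul_iff_of_isSquare hneg_one (by simp)]
    exact hqp
  have h2pq : ¬ IsSquare ((2 * p : ℤ) : ZMod q) := by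
    have htwo : IsSquare (2 : ZMod q) := by simp [ZMod.exists_sq_eq_two_iff hq2, hq8]
    have htwo_ne : (2 : ZMod q) ≠ 0 := Ring.two_ne_zero (by simpa [ringChar.eq _ q])
    simpa [isSquare_mul_iff_of_isSquare htwo htwo_ne] using hpq
  obtain ⟨d₁, d₂, m, n, hd, ⟨hd₂, h⟩ | ⟨-, h⟩⟩ := exists_mul_sq_add_one_or_add_two
    (squarefree_mul_primes hp hq (by lia)) (mul_primes_ne_one hp)
  all_goals
    obtain ⟨h₁, h₂⟩ | ⟨h₁, h₂⟩ | ⟨h₁, h₂⟩ | ⟨h₁, h₂⟩ :=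
      (mul_eq_mul_primes_iff hp hq).1 hd <;> rw [h₁, h₂] at h <;> zify at h
  · exact absurd ⟨p * n ^ 2, by linarith⟩ (not_dvd_sq_sub_of_not_isSquare
      (not_isSquare_neg_one_of_mod_four_eq_three (p := q) (by lia)) m)
  · exact absurd h₂ hd₂
  · exact absurd ⟨q * m ^ 2, by linear_combination -q * h⟩
      (not_dvd_sq_sub_of_not_isSquare hqp (q * n))
  · exact absurd ⟨q * n ^ 2, by linear_combination q * h⟩
      (not_dvd_sq_sub_of_not_isSquare hneg_qp (q * m))
  · exact absurd ⟨q * n ^ 2, by linarith⟩ (not_dvd_sq_sub_of_not_isSquare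
      (not_isSquare_neg_two_of_mod_eight (.inl hp8)) m)
  · exact absurd ⟨q * m ^ 2, by linarith⟩ (not_dvd_sq_sub_of_not_isSquare
      (not_isSquare_two_of_mod_eight_eq_five hp8) n)
  · exact ⟨m, n, by linarith⟩
  · exact absurd ⟨p * m ^ 2, by linear_combination -p * h⟩
      (not_dvd_sq_sub_of_not_isSquare h2pq (p * n))

end

/-! ### Quadratic forms and square roots over the `p`-adic numbers -/

section

variable {ℓ : ℕ} [Fact ℓ.Prime]

lemma exists_primitive_sum_mul_sq_eq_zero {ι : Type*} [Fintype ι] {a : ι → ℤ} {v : ι → ℚ_[ℓ]}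
    (hv : v ≠ 0) (h : ∑ i, a i * v i ^ 2 = 0) :
    ∃ w : ι → ℤ_[ℓ], ∑ i, a i * w i ^ 2 = 0 ∧ ∃ i, w i = 1 := by
  obtain ⟨j, hj⟩ := Function.ne_iff.1 hv
  have : Nonempty ι := ⟨j⟩
  obtain ⟨i, hi⟩ := Finite.exists_max fun i => ‖v i‖
  have hi0 : 0 < ‖v i‖ := (norm_pos_iff.2 hj).trans_le (hi j)
  have hint (j : ι) : ∃ w : ℤ_[ℓ], (w : ℚ_[ℓ]) = v j / v i :=
    ⟨⟨v j / v i, by simpa using div_le_one_of_le₀ (hi j) hi0.le⟩, rfl⟩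
  choose w hw using hint
  have hsum : ∑ j, a j * (w j : ℚ_[ℓ]) ^ 2 = 0 := by
    simp only [hw, div_pow, ← mul_div_assoc, ← Finset.sum_div, h, zero_div]
  exact ⟨w, PadicInt.ext (by simpa [PadicInt.coe_sum] using hsum), i,
    PadicInt.ext ((hw i).trans (div_self (norm_pos_iff.1 hi0)))⟩

lemma exists_primitive_mul_sq_add_mul_sq_add_mul_sq_eq_zero {a b c : ℤ} {x y z : ℚ_[ℓ]}
    (hz : z ≠ 0) (h : a * x ^ 2 + b * y ^ 2 + c * z ^ 2 = 0) :
    ∃ u v w : ℤ_[ℓ], a * u ^ 2 + b * v ^ 2 + c * w ^ 2 = 0 ∧ (u = 1 ∨ v = 1 ∨ w = 1) := by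
  obtain ⟨w, hw, h1⟩ := exists_primitive_sum_mul_sq_eq_zero (a := ![a, b, c]) (v := ![x, y, z])
    (fun h0 => hz (by simpa using congrFun h0 2)) (by simpa [Fin.sum_univ_three] using h)
  exact ⟨w 0, w 1, w 2, by simpa [Fin.sum_univ_three] using hw, by
    simpa [Fin.exists_fin_succ] using h1⟩

end

lemma exists_zmod_eight_primitive_of_padic_two {a b c : ℤ} {x y z : ℚ_[2]}
    (hz : z ≠ 0) (h : a * x ^ 2 + b * y ^ 2 + c * z ^ 2 = 0) :
    ∃ u v w : ZMod 8, a * u ^ 2 + b * v ^ 2 + c * w ^ 2 = 0 ∧ (u = 1 ∨ v = 1 ∨ w = 1) := by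
  obtain ⟨u, v, w, h0, h1⟩ := exists_primitive_mul_sq_add_mul_sq_add_mul_sq_eq_zero hz h
  refine ⟨PadicInt.toZModPow 3 u, PadicInt.toZModPow 3 v, PadicInt.toZModPow 3 w, ?_, ?_⟩
  · simpa using congrArg (PadicInt.toZModPow 3) h0
  · rcases h1 with rfl | rfl | rfl <;> simp

section

variable {p : ℕ}

lemma eq_zero_of_sq_add_two_mul_sq_eq_mul_sq (hp8 : p % 8 = 5) {x y z : ℚ_[2]}
    (h : x ^ 2 + 2 * y ^ 2 = p * z ^ 2) : z = 0 := by
  by_contra hz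
  obtain ⟨u, v, w, h0, h1⟩ := exists_zmod_eight_primitive_of_padic_two (x := x)
    (y := y) (a := 1) (b := 2) (c := -p) hz (by push_cast; linear_combination h)
  have hp : (p : ZMod 8) = 5 := (ZMod.natCast_eq_natCast_iff p 5 8).2 hp8
  push_cast [hp] at h0
  clear * - h0 h1
  revert u v w
  decide

lemma eq_zero_of_sq_add_mul_sq_eq_neg_mul_sq (hp8 : p % 8 = 5) {x y z : ℚ_[2]}
    (h : x ^ 2 + p * y ^ 2 = -(p * z ^ 2)) : z = 0 := by
  by_contra hz
  obtain ⟨u, v, w, h0, h1⟩ := exists_zmod_eight_primitive_of_padic_two (x := x)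
    (y := y) (a := 1) (b := p) (c := p) hz (by push_cast; linear_combination h)
  have hp : (p : ZMod 8) = 5 := (ZMod.natCast_eq_natCast_iff p 5 8).2 hp8
  push_cast [hp] at h0
  clear * - h0 h1
  revert u v w
  decide

variable [Fact p.Prime]

lemma padicInt_toZMod_eq_zero_iff {x : ℤ_[p]} : PadicInt.toZMod x = 0 ↔ (p : ℤ_[p]) ∣ x := by
  rw [← RingHom.mem_ker, PadicInt.ker_toZMod, PadicInt.maximalIdeal_eq_span_p,
    Ideal.mem_span_singleton]

lemma eq_zero_of_sq_eq_mul_sq_of_not_isSquare {k : Type*} [Field k] {a x y : k}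
    (ha : ¬ IsSquare a) (h : x ^ 2 = a * y ^ 2) : x = 0 ∧ y = 0 := by
  have hy : y = 0 := by
    by_contra hy
    exact ha ⟨x / y, by field_simp; exact h.symm⟩
  exact ⟨by simpa [hy] using h, hy⟩

lemma eq_zero_of_sq_add_mul_sq_eq_two_mul_sq (hp : ¬ IsSquare (2 : ZMod p)) {x y z : ℚ_[p]}
    (h : x ^ 2 + p * y ^ 2 = 2 * z ^ 2) : z = 0 := by
  by_contra hz
  obtain ⟨u, v, w, h0, h1⟩ := exists_primitive_mul_sq_add_mul_sq_add_mul_sq_eq_zero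
    (x := x) (y := y) (a := 1) (b := p) (c := -2) hz (by push_cast; linear_combination h)
  obtain ⟨hu, hw⟩ := eq_zero_of_sq_eq_mul_sq_of_not_isSquare hp
    (x := PadicInt.toZMod u) (y := PadicInt.toZMod w) (by
      have := congrArg (PadicInt.toZMod (p := p)) h0
      simp only [map_add, map_mul, map_pow, map_intCast, map_zero] at this
      push_cast [CharP.cast_eq_zero] at this
      linear_combination this)
  rcases h1 with rfl | rfl | rfl
  · simp at hu
  · obtain ⟨a, rfl⟩ := padicInt_toZMod_eq_zero_iff.1 hu
    obtain ⟨b, rfl⟩ := padicInt_toZMod_eq_zero_iff.1 hw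
    have hp0 : (p : ℤ_[p]) ≠ 0 := PadicInt.prime_p.ne_zero
    have hunit : (p : ℤ_[p]) * (2 * b ^ 2 - a ^ 2) = 1 := mul_left_cancel₀ hp0 <| by
      push_cast at h0
      linear_combination -h0
    exact PadicInt.prime_p.not_isUnit (.of_mul_eq_one _ hunit)
  · simp at hw

end

section

variable {ℓ : ℕ} [Fact ℓ.Prime]

lemma exists_padicInt_sq_eq_of_norm_sq_sub_lt {a n : ℤ_[ℓ]} (h : ‖a ^ 2 - n‖ < ‖2 * a‖ ^ 2) :
    ∃ c : ℤ_[ℓ], c ^ 2 = n := by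
  obtain ⟨c, hc, -⟩ := hensels_lemma (F := Polynomial.X ^ 2 - Polynomial.C n) (a := a)
    (by simpa [Polynomial.derivative_X_pow, one_add_one_eq_two] using h)
  exact ⟨c, by simpa [sub_eq_zero] using hc⟩

lemma exists_padicInt_sq_eq_of_isSquare_zmod {n : ℤ} (hℓ : ℓ ≠ 2) (hn0 : (n : ZMod ℓ) ≠ 0)
    (hn : IsSquare (n : ZMod ℓ)) : ∃ c : ℤ_[ℓ], c ^ 2 = n := by
  obtain ⟨a, hb⟩ := hn
  obtain ⟨b, rfl⟩ := ZMod.intCast_surjective a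
  have hnorm : ‖((2 * b : ℤ) : ℤ_[ℓ])‖ = 1 := by
    rw [← not_ne_iff, ne_iff_lt_iff_le.2 (PadicInt.norm_le_one _), PadicInt.norm_int_lt_one_iff_dvd,
      ← ZMod.intCast_zmod_eq_zero_iff_dvd]
    have h2 : (2 : ZMod ℓ) ≠ 0 := Ring.two_ne_zero (by simpa [ringChar.eq _ ℓ])
    have hb0 : (b : ZMod ℓ) ≠ 0 := fun h => hn0 (by rw [hb, h, mul_zero])
    push_cast
    exact mul_ne_zero h2 hb0
  have hdvd : (ℓ : ℤ) ∣ b ^ 2 - n :=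
    (ZMod.intCast_eq_intCast_iff_dvd_sub _ _ _).1 (by push_cast; rw [hb, sq])
  have hlt := (PadicInt.norm_int_lt_one_iff_dvd _).2 hdvd
  push_cast at hnorm hlt
  exact exists_padicInt_sq_eq_of_norm_sq_sub_lt (a := (b : ℤ_[ℓ])) (by rwa [hnorm, one_pow])

lemma exists_padicInt_two_sq_eq_of_mod_eight {n : ℤ} (hn : n % 8 = 1) :
    ∃ c : ℤ_[2], c ^ 2 = n := by
  refine exists_padicInt_sq_eq_of_norm_sq_sub_lt (a := 1) ?_
  have h : ‖((1 - n : ℤ) : ℤ_[2])‖ ≤ (2 : ℕ) ^ (-(3 : ℕ) : ℤ) :=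
    PadicInt.norm_int_le_pow_iff_dvd.2 (by push_cast; lia)
  have h2 : ‖(2 : ℤ_[2])‖ = 2⁻¹ := by simpa using PadicInt.norm_p (p := 2)
  push_cast at h
  rw [one_pow, mul_one, h2]
  refine h.trans_lt ?_
  norm_num

end

/-! ### Adjoining square roots -/

lemma nonempty_algHom_adjoin_simple_of_sq_eq {k F E : Type*} [Field k] [Field F] [Field E]
    [Algebra k F] [Algebra k E] {a : k} {t : F} {c : E} (ht : t ^ 2 = algebraMap k F a)
    (hc : c ^ 2 = algebraMap k E a) : Nonempty (k⟮t⟯ →ₐ[k] E) := by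
  have hmonic : (Polynomial.X ^ 2 - Polynomial.C a).Monic :=
    Polynomial.monic_X_pow_sub_C _ two_ne_zero
  have hroot : Polynomial.aeval t (Polynomial.X ^ 2 - Polynomial.C a) = 0 := by simp [ht]
  have hsplit : ((Polynomial.X ^ 2 - Polynomial.C a).map (algebraMap k E)).Splits := by
    have : (Polynomial.X ^ 2 - Polynomial.C a).map (algebraMap k E) =
        (Polynomial.X - Polynomial.C c) * (Polynomial.X - Polynomial.C (-c)) := by
      simp [← hc]; ring
    rw [this]
    exact (Polynomial.Splits.X_sub_C _).mul (Polynomial.Splits.X_sub_C _)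
  refine nonempty_algHom_adjoin_of_splits fun s hs => ?_
  obtain rfl := Set.mem_singleton_iff.1 hs
  exact ⟨⟨_, hmonic, hroot⟩, hsplit.of_dvd ((hmonic.map _).ne_zero)
    (Polynomial.map_dvd _ (minpoly.dvd _ _ hroot))⟩

/-! ### Quadratic extensions -/

section

variable {k M : Type*} [Field k] [Field M] [Algebra k M] {x : M} {a : k}

lemma ne_zero_of_sq_eq_algebraMap (hx : x ^ 2 = algebraMap k M a) (ha : ¬ IsSquare a) :
    x ≠ 0 := by
  rintro rfl
  refine ha ⟨0, (algebraMap k M).injective ?_⟩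
  simpa using hx.symm

lemma isQuadraticExtension_adjoin_simple_of_sq_eq (hx : x ^ 2 = algebraMap k M a)
    (ha : ¬ IsSquare a) : Algebra.IsQuadraticExtension k k⟮x⟯ := by
  have hirr : Irreducible (Polynomial.X ^ 2 - Polynomial.C a) :=
    X_pow_sub_C_irreducible_of_prime Nat.prime_two fun b hb => ha ⟨b, by rw [← hb, sq]⟩
  have hmin := minpoly.eq_of_irreducible_of_monic hirr (x := x) (by simp [hx])
    (Polynomial.monic_X_pow_sub_C a two_ne_zero)
  have hint : IsIntegral k x :=
    ⟨_, Polynomial.monic_X_pow_sub_C a two_ne_zero, by simp [hx]⟩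
  exact ⟨by rw [adjoin.finrank hint, ← hmin, Polynomial.natDegree_X_pow_sub_C]⟩

variable [CharZero k] [Algebra.IsQuadraticExtension k M] {σ : Gal(M/k)}

variable (k M) in
lemma natCard_gal_eq_two : Nat.card Gal(M/k) = 2 := by
  rw [IsGalois.card_aut_eq_finrank, Algebra.IsQuadraticExtension.finrank_eq_two]

variable (k M) in
lemma exists_gal_ne_one : ∃ σ : Gal(M/k), σ ≠ 1 := by
  have : Nontrivial Gal(M/k) :=
    Finite.one_lt_card_iff_nontrivial.1 (by rw [natCard_gal_eq_two]; norm_num)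
  exact exists_ne 1

lemma gal_eq_one_or_eq (hσ : σ ≠ 1) (τ : Gal(M/k)) : τ = 1 ∨ τ = σ := by
  obtain ⟨y, -, hy⟩ := (Nat.card_eq_two_iff' (1 : Gal(M/k))).1 (natCard_gal_eq_two k M)
  by_cases hτ : τ = 1
  · exact Or.inl hτ
  · exact Or.inr ((hy τ hτ).trans (hy σ hσ).symm)

lemma gal_mul_self (σ : Gal(M/k)) : σ * σ = 1 := by
  rw [← sq, ← natCard_gal_eq_two k M, pow_card_eq_one']

lemma gal_apply_apply (σ : Gal(M/k)) (z : M) : σ (σ z) = z :=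
  DFunLike.congr_fun (gal_mul_self σ) z

lemma mem_range_of_gal_apply_eq (hσ : σ ≠ 1) {z : M} (hz : σ z = z) :
    z ∈ Set.range (algebraMap k M) := by
  refine (IsGalois.mem_range_algebraMap_iff_fixed z).2 fun τ => ?_
  obtain rfl | rfl := gal_eq_one_or_eq hσ τ
  exacts [rfl, hz]

lemma algebraMap_norm_eq_mul_gal_apply (hσ : σ ≠ 1) (z : M) :
    algebraMap k M (Algebra.norm k z) = z * σ z := by
  classical
  have huniv : (Finset.univ : Finset Gal(M/k)) = {1, σ} := by
    ext τ; simpa using gal_eq_one_or_eq hσ τ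
  rw [Algebra.norm_eq_prod_automorphisms, huniv, Finset.prod_pair hσ.symm, AlgEquiv.one_apply]

/-- Hilbert's Theorem 90 for quadratic extensions in any universe;
`groupCohomology.exists_div_of_norm_eq_one` is confined to fields in `Type`. -/
lemma exists_mul_gal_apply_eq_of_norm_eq_one (hσ : σ ≠ 1) {z : M} (hz : Algebra.norm k z = 1) :
    ∃ y ≠ 0, z * σ y = y := by
  have hzσ : z * σ z = 1 := by rw [← algebraMap_norm_eq_mul_gal_apply hσ, hz, map_one]
  by_cases h : z = -1
  · obtain ⟨w, hw⟩ := DFunLike.ne_iff.1 hσ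
    refine ⟨w - σ w, sub_ne_zero.2 (Ne.symm hw), ?_⟩
    rw [h, map_sub, gal_apply_apply]
    ring
  · refine ⟨1 + z, fun h0 => h (by linear_combination h0), ?_⟩
    rw [map_add, map_one]
    linear_combination hzσ

lemma gal_apply_eq_neg (hσ : σ ≠ 1) (hx : x ^ 2 = algebraMap k M a) (ha : ¬ IsSquare a) :
    σ x = -x := by
  have hsq : σ x ^ 2 = x ^ 2 := by rw [← map_pow, hx, AlgEquiv.commutes]
  refine (sq_eq_sq_iff_eq_or_eq_neg.1 hsq).resolve_left fun h => ha ?_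
  obtain ⟨y, rfl⟩ := mem_range_of_gal_apply_eq hσ h
  exact ⟨y, (algebraMap k M).injective (by rw [← hx, map_mul, sq])⟩

lemma exists_eq_algebraMap_add_algebraMap_mul (hx : x ^ 2 = algebraMap k M a)
    (ha : ¬ IsSquare a) (z : M) : ∃ X Y : k, z = algebraMap k M X + algebraMap k M Y * x := by
  obtain ⟨σ, hσ⟩ := exists_gal_ne_one k M
  have := charZero_of_injective_algebraMap (algebraMap k M).injective
  have hx0 : x ≠ 0 := ne_zero_of_sq_eq_algebraMap hx ha
  have hσx := gal_apply_eq_neg hσ hx ha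
  obtain ⟨X, hX⟩ := mem_range_of_gal_apply_eq hσ (z := (z + σ z) / 2) (by
    rw [map_div₀, map_add, gal_apply_apply, map_ofNat, add_comm])
  obtain ⟨Y, hY⟩ := mem_range_of_gal_apply_eq hσ (z := (z - σ z) / (2 * x)) (by
    rw [map_div₀, map_sub, gal_apply_apply, map_mul, map_ofNat, hσx]
    field_simp
    ring)
  refine ⟨X, Y, ?_⟩
  rw [hX, hY]
  field_simp
  ring

lemma norm_algebraMap_add_algebraMap_mul (hx : x ^ 2 = algebraMap k M a) (ha : ¬ IsSquare a)
    (X Y : k) : Algebra.norm k (algebraMap k M X + algebraMap k M Y * x) = X ^ 2 - a * Y ^ 2 := by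
  obtain ⟨σ, hσ⟩ := exists_gal_ne_one k M
  apply (algebraMap k M).injective
  simp only [algebraMap_norm_eq_mul_gal_apply hσ, map_sub, map_add, map_mul, map_pow,
    AlgEquiv.commutes, gal_apply_eq_neg hσ hx ha, ← hx]
  ring

lemma isSquare_or_isSquare_mul_of_isSquare_algebraMap (hx : x ^ 2 = algebraMap k M a)
    (ha : ¬ IsSquare a) {c : k} (hc : IsSquare (algebraMap k M c)) :
    IsSquare c ∨ IsSquare (a * c) := by
  obtain ⟨σ, hσ⟩ := exists_gal_ne_one k M
  obtain ⟨z, hz⟩ := hc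
  have hsq : σ z ^ 2 = z ^ 2 := by rw [← map_pow, sq, ← hz, AlgEquiv.commutes]
  rcases sq_eq_sq_iff_eq_or_eq_neg.1 hsq with h | h
  · obtain ⟨y, rfl⟩ := mem_range_of_gal_apply_eq hσ h
    exact Or.inl ⟨y, (algebraMap k M).injective (by rw [hz, map_mul])⟩
  · obtain ⟨y, hy⟩ := mem_range_of_gal_apply_eq hσ (z := x * z) (by
      rw [map_mul, h, gal_apply_eq_neg hσ hx ha, neg_mul_neg])
    refine Or.inr ⟨y, (algebraMap k M).injective ?_⟩
    rw [map_mul, map_mul, ← hx, hz, hy]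
    ring

end

lemma exists_norm_eq_sq_sub_mul_sq {k F : Type*} [Field k] [Field F] [Algebra k F] [CharZero k]
    [FiniteDimensional k F] {x : F} {a : k} (hx : x ^ 2 = algebraMap k F a) (ha : ¬ IsSquare a)
    (z : F) : ∃ X Y : k, Algebra.norm k z = X ^ 2 - a * Y ^ 2 := by
  have := isQuadraticExtension_adjoin_simple_of_sq_eq hx ha
  have hgen : AdjoinSimple.gen k x ^ 2 = algebraMap k k⟮x⟯ a := Subtype.ext hx
  obtain ⟨X, Y, h⟩ := exists_eq_algebraMap_add_algebraMap_mul hgen ha (Algebra.norm k⟮x⟯ z)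
  refine ⟨X, Y, ?_⟩
  rw [← Algebra.norm_norm (S := k⟮x⟯), h, norm_algebraMap_add_algebraMap_mul hgen ha]

/-! ### Ideal classes -/

section

variable {R : Type*} [CommRing R] [IsDedekindDomain R]

open nonZeroDivisors Classical in
/-- The class of a nonzero ideal, with the junk value `1` at `⊥`. -/
def idealClass (I : Ideal R) : ClassGroup R :=
  if h : I ∈ (Ideal R)⁰ then ClassGroup.mk0 ⟨I, h⟩ else 1

lemma idealClass_eq_mk0 {I : Ideal R} (h : I ≠ ⊥) :
    idealClass I = ClassGroup.mk0 ⟨I, mem_nonZeroDivisors_iff_ne_zero.2 h⟩ :=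
  dif_pos _

lemma idealClass_mul {I J : Ideal R} (hI : I ≠ ⊥) (hJ : J ≠ ⊥) :
    idealClass (I * J) = idealClass I * idealClass J := by
  rw [idealClass_eq_mk0 hI, idealClass_eq_mk0 hJ, idealClass_eq_mk0 (mul_ne_zero hI hJ),
    ← map_mul]
  rfl

lemma idealClass_eq_one_iff {I : Ideal R} (hI : I ≠ ⊥) :
    idealClass I = 1 ↔ I.IsPrincipal := by
  rw [idealClass_eq_mk0 hI, ClassGroup.mk0_eq_one_iff]

lemma idealClass_span_singleton (x : R) : idealClass (Ideal.span {x}) = 1 := by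
  by_cases hx : Ideal.span {x} = ⊥
  · simp [hx, idealClass]
  · exact (idealClass_eq_one_iff hx).2 ⟨x, rfl⟩

lemma idealClass_eq_iff {I J : Ideal R} (hI : I ≠ ⊥) (hJ : J ≠ ⊥) :
    idealClass I = idealClass J ↔
      ∃ x y : R, x ≠ 0 ∧ y ≠ 0 ∧ Ideal.span {x} * I = Ideal.span {y} * J := by
  rw [idealClass_eq_mk0 hI, idealClass_eq_mk0 hJ, ClassGroup.mk0_eq_mk0_iff]
  simp only [exists_prop, exists_and_left]

lemma exists_idealClass_eq (c : ClassGroup R) : ∃ I : Ideal R, I ≠ ⊥ ∧ idealClass I = c := by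
  obtain ⟨⟨I, hI⟩, rfl⟩ := ClassGroup.mk0_surjective c
  exact ⟨I, nonZeroDivisors.ne_zero hI, idealClass_eq_mk0 (nonZeroDivisors.ne_zero hI)⟩

lemma idealClass_pow {I : Ideal R} (hI : I ≠ ⊥) (n : ℕ) :
    idealClass (I ^ n) = idealClass I ^ n := by
  induction n with
  | zero => simpa using idealClass_span_singleton (1 : R)
  | succ n ih => rw [pow_succ, idealClass_mul (pow_ne_zero n hI) hI, ih, pow_succ]

lemma isPrincipal_pow_natCard_classGroup {I : Ideal R} (hI : I ≠ ⊥) :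
    (I ^ Nat.card (ClassGroup R)).IsPrincipal := by
  rw [← idealClass_eq_one_iff (pow_ne_zero _ hI), idealClass_pow hI, pow_card_eq_one']

lemma idealClass_map_pow_natCard_classGroup {S : Type*} [CommRing S] [IsDedekindDomain S]
    [Algebra R S] [FaithfulSMul R S] {I : Ideal R} (hI : I ≠ ⊥) :
    idealClass (I.map (algebraMap R S)) ^ Nat.card (ClassGroup R) = 1 := by
  obtain ⟨g, hg⟩ := isPrincipal_pow_natCard_classGroup hI
  have hI' : I.map (algebraMap R S) ≠ ⊥ :=
    (Ideal.map_eq_bot_iff_of_injective (FaithfulSMul.algebraMap_injective R S)).not.2 hI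
  rw [← idealClass_pow hI', ← Ideal.map_pow, hg, Ideal.submodule_span_eq, Ideal.map_span,
    Set.image_singleton, idealClass_span_singleton]

end

lemma pow_eq_self_of_sq_eq_one {G : Type*} [Monoid G] {c : G} {n : ℕ} (hn : Odd n)
    (hc : c ^ 2 = 1) : c ^ n = c := by
  obtain ⟨k, rfl⟩ := hn
  rw [pow_succ, pow_mul, hc, one_pow, one_mul]

/-! ### Ambiguous classes of a quadratic extension -/

open scoped Pointwise

lemma smul_span_singleton {G R : Type*} [Monoid G] [CommRing R] [MulSemiringAction G R] (g : G)
    (x : R) : g • Ideal.span {x} = Ideal.span {g • x} := by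
  rw [Ideal.smul_closure, Set.smul_set_singleton]

section

variable {L M : Type*} [Field L] [Field M] [Algebra L M]

lemma coe_gal_smul (σ : Gal(M/L)) (x : 𝓞 M) : ((σ • x : 𝓞 M) : M) = σ x := rfl

lemma gal_smul_algebraMap (σ : Gal(M/L)) (x : 𝓞 L) :
    σ • algebraMap (𝓞 L) (𝓞 M) x = algebraMap (𝓞 L) (𝓞 M) x :=
  RingOfIntegers.ext (σ.commutes (x : L))

lemma gal_smul_map_algebraMap (σ : Gal(M/L)) (I : Ideal (𝓞 L)) :
    σ • I.map (algebraMap (𝓞 L) (𝓞 M)) = I.map (algebraMap (𝓞 L) (𝓞 M)) := by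
  refine (Ideal.map_map (algebraMap (𝓞 L) (𝓞 M)) _).trans ?_
  congr 1
  exact RingHom.ext (gal_smul_algebraMap σ)

variable [NumberField L] [NumberField M]

lemma eq_top_of_relNorm_eq_top {I : Ideal (𝓞 M)} (hI : Ideal.relNorm (𝓞 L) I = ⊤) : I = ⊤ := by
  rw [← Ideal.absNorm_eq_one_iff, ← Ideal.absNorm_relNorm (𝓞 L) (𝓞 M) I, hI, Ideal.absNorm_top]

lemma coe_intNorm (x : 𝓞 M) :
    ((Algebra.intNorm (𝓞 L) (𝓞 M) x : 𝓞 L) : L) = Algebra.norm L (x : M) :=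
  Algebra.algebraMap_intNorm x

variable [Algebra.IsQuadraticExtension L M] {σ : Gal(M/L)}

lemma algebraMap_intNorm_eq_mul_gal_smul (hσ : σ ≠ 1) (x : 𝓞 M) :
    algebraMap (𝓞 L) (𝓞 M) (Algebra.intNorm (𝓞 L) (𝓞 M) x) = x * σ • x := by
  apply RingOfIntegers.ext
  change algebraMap L M (Algebra.intNorm (𝓞 L) (𝓞 M) x : 𝓞 L) = x * σ x
  rw [coe_intNorm, algebraMap_norm_eq_mul_gal_apply hσ]

lemma mul_gal_smul_eq_map_relNorm (hσ : σ ≠ 1) (I : Ideal (𝓞 M)) :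
    I * σ • I = (Ideal.relNorm (𝓞 L) I).map (algebraMap (𝓞 L) (𝓞 M)) := by
  by_cases hI : I = ⊥
  · simp [hI]
  have hle : (Ideal.relNorm (𝓞 L) I).map (algebraMap (𝓞 L) (𝓞 M)) ≤ I * σ • I := by
    rw [Ideal.map_relNorm, Ideal.span_le]
    rintro _ ⟨x, hx, rfl⟩
    simp only [Function.comp_apply, algebraMap_intNorm_eq_mul_gal_smul hσ]
    exact Ideal.mul_mem_mul hx (Ideal.smul_mem_pointwise_smul σ x I hx)
  obtain ⟨J, hJ⟩ := Ideal.dvd_iff_le.2 hle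
  have hJnorm : Ideal.relNorm (𝓞 L) J = 1 := by
    have hN : Ideal.relNorm (𝓞 L) I ^ 2 ≠ 0 := pow_ne_zero 2 (by simpa using hI)
    refine mul_left_cancel₀ hN ?_
    have h := congrArg (Ideal.relNorm (𝓞 L)) hJ
    rw [Ideal.relNorm_algebraMap, ← IsFractionRing.finrank_eq (𝓞 L) L (𝓞 M) M,
      Algebra.IsQuadraticExtension.finrank_eq_two, map_mul, map_mul, Ideal.relNorm_smul] at h
    rw [mul_one, sq, ← h, sq]
  rw [hJ, eq_top_of_relNorm_eq_top (I := J) (L := L) (by simpa using hJnorm), Ideal.mul_top]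

lemma eq_map_under_or_sub_gal_smul_mem (hσ : σ ≠ 1) {P : Ideal (𝓞 M)} (hP : P.IsPrime)
    (hP0 : P ≠ ⊥) (hs : σ • P = P) :
    P = (P.under (𝓞 L)).map (algebraMap (𝓞 L) (𝓞 M)) ∨ ∀ x, x - σ • x ∈ P := by
  have hmax : P.IsMaximal := hP.isMaximal hP0
  set p := P.under (𝓞 L)
  have hpmax : p.IsMaximal := Ideal.IsMaximal.under (𝓞 L) P
  have hover : P.LiesOver p := ⟨rfl⟩
  have hsq := mul_gal_smul_eq_map_relNorm hσ P
  rw [hs, Ideal.relNorm_eq_pow_of_isMaximal P p, Ideal.map_pow] at hsq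
  rcases hf : P.inertiaDeg (𝓞 L) with _ | _ | f
  · rw [hf, pow_zero, Ideal.one_eq_top] at hsq
    exact absurd (eq_top_iff.2 (hsq.ge.trans Ideal.mul_le_right)) hP.ne_top
  · refine Or.inr fun x => ?_
    rw [Ideal.inertiaDeg_eq_of_isMaximal p P, zero_add] at hf
    let := Ideal.Quotient.field p
    have hbij := Algebra.finrank_eq_one_iff_bijective_algebraMap.1 hf
    obtain ⟨a, ha⟩ := hbij.2 (Ideal.Quotient.mk P x)
    obtain ⟨a, rfl⟩ := Ideal.Quotient.mk_surjective a
    rw [Ideal.Quotient.algebraMap_mk_of_liesOver, Ideal.Quotient.eq] at ha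
    have hσa := Ideal.smul_mem_pointwise_smul σ _ _ ha
    rw [hs, smul_sub, gal_smul_algebraMap] at hσa
    simpa using P.sub_mem hσa ha
  · refine Or.inl (le_antisymm ?_ Ideal.map_comap_le)
    have hdvd : p.map (algebraMap (𝓞 L) (𝓞 M)) ^ 2 ∣ P ^ 2 := by
      rw [sq P, hsq, hf]
      exact pow_dvd_pow _ (by omega)
    exact Ideal.dvd_iff_le.1 ((UniqueFactorizationMonoid.pow_dvd_pow_iff_dvd two_ne_zero).1 hdvd)

lemma exists_gal_smul_eq_factor (hσ : σ ≠ 1) {I : Ideal (𝓞 M)} (hI : I ≠ ⊥) (htop : I ≠ ⊤)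
    (hs : σ • I = I) :
    ∃ A J : Ideal (𝓞 M), I = A * J ∧ A ≠ ⊤ ∧ σ • A = A ∧
      ((∃ B : Ideal (𝓞 L), A = B.map (algebraMap (𝓞 L) (𝓞 M))) ∨
        A.IsPrime ∧ ∀ x, x - σ • x ∈ A) := by
  obtain ⟨P, hmax, hIP⟩ := Ideal.exists_le_maximal I htop
  have hP0 : P ≠ ⊥ := fun h => hI (le_bot_iff.1 (h ▸ hIP))
  obtain ⟨J, hJ⟩ := Ideal.dvd_iff_le.2 hIP
  by_cases hPs : σ • P = P
  · refine ⟨P, J, hJ, hmax.ne_top, hPs, ?_⟩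
    exact (eq_map_under_or_sub_gal_smul_mem hσ hmax.isPrime hP0 hPs).imp
      (fun h => ⟨_, h⟩) fun h => ⟨hmax.isPrime, h⟩
  · have hprime : Prime (σ • P) :=
      Ideal.prime_of_isPrime ((smul_ne_zero_iff_ne σ).2 hP0) (hmax.isPrime.smul σ)
    have hdvd : σ • P ∣ P * J := by
      rw [← hJ, ← hs]
      exact Ideal.dvd_iff_le.2 (smul_mono_right σ hIP)
    obtain ⟨J', hJ'⟩ := (hprime.dvd_or_dvd hdvd).resolve_left fun h =>
      hPs (hmax.eq_of_le (hmax.isPrime.smul σ).ne_top (Ideal.dvd_iff_le.1 h)).symm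
    refine ⟨P * σ • P, J', by rw [hJ, hJ', mul_assoc], fun h => hmax.ne_top ?_, ?_,
      Or.inl ⟨_, mul_gal_smul_eq_map_relNorm hσ P⟩⟩
    · exact eq_top_iff.2 (h.ge.trans Ideal.mul_le_left)
    · rw [mul_gal_smul_eq_map_relNorm hσ, gal_smul_map_algebraMap]

lemma idealClass_mem_of_gal_smul_eq (hσ : σ ≠ 1) (H : Subgroup (ClassGroup (𝓞 M)))
    (hH : ∀ J : Ideal (𝓞 L), J ≠ ⊥ → idealClass (J.map (algebraMap (𝓞 L) (𝓞 M))) ∈ H)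
    {I : Ideal (𝓞 M)} (hP : ∀ P : Ideal (𝓞 M), P.IsPrime → P ≠ ⊥ → σ • P = P →
      (∀ x, x - σ • x ∈ P) → I ≤ P → idealClass P ∈ H) (hI : I ≠ ⊥) (hs : σ • I = I) :
    idealClass I ∈ H := by
  induction I using WellFoundedGT.induction with
  | ind I ih =>
  by_cases htop : I = ⊤
  · rw [htop, (idealClass_eq_one_iff (htop ▸ hI)).2 inferInstance]
    exact H.one_mem
  obtain ⟨A, J, hAJ, hAtop, hAs, hA⟩ := exists_gal_smul_eq_factor hσ hI htop hs
  have hA0 : A ≠ ⊥ := by rintro rfl; simp [hAJ] at hI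
  have hJ0 : J ≠ ⊥ := by rintro rfl; simp [hAJ] at hI
  have hJs : σ • J = J := mul_left_cancel₀ hA0 <| by
    rw [← hAJ, ← hs, hAJ, smul_mul', hAs]
  have hlt : I < J := lt_of_le_of_ne (hAJ ▸ Ideal.mul_le_right) fun h => hAtop <| by
    rw [← Ideal.one_eq_top]
    exact mul_right_cancel₀ hJ0 (by rw [one_mul, ← hAJ, h])
  rw [hAJ, idealClass_mul hA0 hJ0]
  refine H.mul_mem ?_ (ih J hlt (fun P hPp hP0 hPs hPσ hJP => hP P hPp hP0 hPs hPσ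
    (hlt.le.trans hJP)) hJ0 hJs)
  rcases hA with ⟨B, rfl⟩ | ⟨hAp, hAσ⟩
  · exact hH B fun h => hA0 (by rw [h, Ideal.map_bot])
  · exact hP A hAp hA0 hAs hAσ (hAJ ▸ Ideal.mul_le_left)

variable (L M) in
/-- Every unit of `L` that is the norm of an element of `M` is the norm of a unit of `M`, a
condition under which every ambiguous class of a quadratic extension `M / L` is the class of an
ambiguous ideal. -/
def UnitNormsLift : Prop :=
  ∀ (u : (𝓞 L)ˣ) (α : M), Algebra.norm L α = ((u : 𝓞 L) : L) →
    ∃ v : (𝓞 M)ˣ, Algebra.norm L ((v : 𝓞 M) : M) = ((u : 𝓞 L) : L)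

lemma exists_mul_eq_mul_gal_smul (hσ : σ ≠ 1) {a b : 𝓞 M} (hb0 : b ≠ 0)
    (hab : Algebra.norm L (a : M) = Algebra.norm L (b : M)) :
    ∃ x : 𝓞 M, x ≠ 0 ∧ b * x = a * σ • x := by
  have hb : (b : M) ≠ 0 := by simpa using hb0
  have hone : Algebra.norm L ((a : M) / b) = 1 := by
    rw [div_eq_mul_inv, map_mul, Algebra.norm_inv, hab,
      mul_inv_cancel₀ (Algebra.norm_ne_zero_iff.2 hb)]
  obtain ⟨y, hy0, hy⟩ := exists_mul_gal_apply_eq_of_norm_eq_one hσ hone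
  obtain ⟨n, hn, hint⟩ := ((IsFractionRing.isAlgebraic_iff ℤ ℚ M).2
    (Algebra.IsAlgebraic.isAlgebraic (R := ℚ) y)).exists_integral_multiple
  obtain ⟨x, hx⟩ : ∃ x : 𝓞 M, (x : M) = n * y :=
    ⟨⟨n • y, hint⟩, by rw [← zsmul_eq_mul]; rfl⟩
  rw [div_mul_eq_mul_div, div_eq_iff hb] at hy
  refine ⟨x, fun h => ?_, RingOfIntegers.ext ?_⟩
  · simp [h, hn, hy0] at hx
  · change (b : M) * x = a * ((σ • x : 𝓞 M) : M)
    rw [coe_gal_smul, hx, map_mul, map_intCast]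
    linear_combination (-n : M) * hy

lemma UnitNormsLift.exists_gal_smul_eq (hU : UnitNormsLift L M) (hσ : σ ≠ 1) {β g : 𝓞 M}
    (hβ : β ≠ 0) {I : Ideal (𝓞 M)} (hI : I ≠ ⊥)
    (h : Ideal.span {β} * σ • I = Ideal.span {g} * I) :
    ∃ x : 𝓞 M, x ≠ 0 ∧ σ • (Ideal.span {x} * I) = Ideal.span {x} * I := by
  have hnorm := congrArg (Ideal.relNorm (𝓞 L)) h
  rw [map_mul, map_mul, Ideal.relNorm_smul, Ideal.relNorm_singleton,
    Ideal.relNorm_singleton] at hnorm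
  obtain ⟨u, hu⟩ := Ideal.span_singleton_eq_span_singleton.1
    (mul_right_cancel₀ (by simpa using hI) hnorm)
  have hβnorm : Algebra.norm L (β : M) ≠ 0 := Algebra.norm_ne_zero_iff.2 (by simpa using hβ)
  have hu' : Algebra.norm L (g : M) = Algebra.norm L (β : M) * ((u : 𝓞 L) : L) := by
    rw [← coe_intNorm, ← coe_intNorm, ← hu]
    exact map_mul (algebraMap (𝓞 L) L) _ _
  obtain ⟨v, hv⟩ := hU u ((g : M) * (β : M)⁻¹) (by
    rw [map_mul, Algebra.norm_inv, hu', mul_right_comm, mul_inv_cancel₀ hβnorm, one_mul])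
  obtain ⟨x, hx0, hx⟩ := exists_mul_eq_mul_gal_smul (a := g) (b := β * v) hσ
    (mul_ne_zero hβ v.ne_zero) (by
      rw [hu', ← hv, ← map_mul]
      rfl)
  refine ⟨x, hx0, mul_left_cancel₀ (a := Ideal.span {β}) (by simpa using hβ) ?_⟩
  calc Ideal.span {β} * σ • (Ideal.span {x} * I)
      = Ideal.span {σ • x} * (Ideal.span {β} * σ • I) := by
        rw [smul_mul', smul_span_singleton]; ring
    _ = Ideal.span {g * σ • x} * I := by
        rw [h, ← Ideal.span_singleton_mul_span_singleton]; ring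
    _ = Ideal.span {β * x * v} * I := by rw [← hx]; congr 3; ring
    _ = Ideal.span {β} * (Ideal.span {x} * I) := by
        rw [Ideal.span_singleton_mul_right_unit v.isUnit,
          ← Ideal.span_singleton_mul_span_singleton, mul_assoc]

lemma UnitNormsLift.exists_idealClass_eq_of_sq_eq_one (hU : UnitNormsLift L M) (hσ : σ ≠ 1)
    (hodd : Odd (Nat.card (ClassGroup (𝓞 L)))) {c : ClassGroup (𝓞 M)} (hc : c ^ 2 = 1) :
    ∃ I : Ideal (𝓞 M), I ≠ ⊥ ∧ σ • I = I ∧ idealClass I = c := by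
  obtain ⟨A, hA0, hAc⟩ := exists_idealClass_eq c
  set I := A ^ Nat.card (ClassGroup (𝓞 L)) with hI
  have hI0 : I ≠ ⊥ := pow_ne_zero _ hA0
  have hIc : idealClass I = c := by
    rw [hI, idealClass_pow hA0, hAc, pow_eq_self_of_sq_eq_one hodd hc]
  obtain ⟨g, hg⟩ : (Ideal.relNorm (𝓞 L) I).IsPrincipal := by
    rw [hI, map_pow]
    exact isPrincipal_pow_natCard_classGroup (by simpa using hA0)
  have hg' : I * σ • I = Ideal.span {algebraMap (𝓞 L) (𝓞 M) g} := by
    rw [mul_gal_smul_eq_map_relNorm hσ, hg, Ideal.submodule_span_eq, Ideal.map_span,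
      Set.image_singleton]
  obtain ⟨β, hβ⟩ : (I * I).IsPrincipal := by
    rw [← idealClass_eq_one_iff (mul_ne_zero hI0 hI0), idealClass_mul hI0 hI0, hIc, ← sq, hc]
  rw [Ideal.submodule_span_eq] at hβ
  have hβ0 : β ≠ 0 := by
    rintro rfl
    exact mul_ne_zero hI0 hI0 (by simpa using hβ)
  obtain ⟨x, hx0, hx⟩ := hU.exists_gal_smul_eq hσ hβ0 hI0
    (g := algebraMap (𝓞 L) (𝓞 M) g) (by rw [← hβ, ← hg']; ring)
  have hx0' : Ideal.span {x} ≠ ⊥ := by simpa using hx0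
  refine ⟨Ideal.span {x} * I, mul_ne_zero hx0' hI0, hx, ?_⟩
  rw [idealClass_mul hx0' hI0, idealClass_span_singleton, one_mul, hIc]

lemma UnitNormsLift.odd_natCard_classGroup (hU : UnitNormsLift L M) (hσ : σ ≠ 1)
    (hodd : Odd (Nat.card (ClassGroup (𝓞 L))))
    (hP : ∀ P : Ideal (𝓞 M), P.IsPrime → P ≠ ⊥ → σ • P = P → (∀ x, x - σ • x ∈ P) →
      P.IsPrincipal) : Odd (Nat.card (ClassGroup (𝓞 M))) := by
  by_contra heven
  rw [Nat.not_odd_iff_even, even_iff_two_dvd] at heven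
  obtain ⟨c, hc⟩ := exists_prime_orderOf_dvd_card' 2 heven
  have hc2 : c ^ 2 = 1 := hc ▸ pow_orderOf_eq_one c
  obtain ⟨I, hI0, hIs, rfl⟩ := hU.exists_idealClass_eq_of_sq_eq_one hσ hodd hc2
  have hmem := idealClass_mem_of_gal_smul_eq hσ
    (powMonoidHom (Nat.card (ClassGroup (𝓞 L))) : ClassGroup (𝓞 M) →* _).ker
    (fun J hJ => idealClass_map_pow_natCard_classGroup hJ)
    (fun P hPp hP0 hPs hPσ _ => by
      rw [(idealClass_eq_one_iff hP0).2 (hP P hPp hP0 hPs hPσ)]; exact one_mem _) hI0 hIs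
  rw [MonoidHom.mem_ker, powMonoidHom_apply, pow_eq_self_of_sq_eq_one hodd hc2] at hmem
  simp [hmem] at hc

end

/-! ### Units modulo squares -/

section

lemma isSquare_coe_unit {K : Type*} [Field K] {u : (𝓞 K)ˣ} (h : IsSquare u) :
    IsSquare ((u : 𝓞 K) : K) := by
  obtain ⟨v, rfl⟩ := h
  exact ⟨((v : 𝓞 K) : K), map_mul (algebraMap (𝓞 K) K) _ _⟩

variable {K : Type*} [Field K] [NumberField K]

lemma isSquare_or_isSquare_neg_of_mem_torsion (h1 : ¬ IsSquare (-1 : (𝓞 K)ˣ)) {u : (𝓞 K)ˣ}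
    (hu : u ∈ Units.torsion K) : IsSquare u ∨ IsSquare (-u) := by
  obtain ⟨g, hg⟩ := IsCyclic.exists_generator (α := Units.torsion K)
  have hneg : (-1 : (𝓞 K)ˣ) ∈ Units.torsion K :=
    (CommGroup.mem_torsion _).2 (isOfFinOrder_iff_pow_eq_one.2 ⟨2, two_pos, by simp⟩)
  obtain ⟨k, hk⟩ := hg ⟨u, hu⟩
  obtain ⟨m, hm⟩ := hg ⟨-1, hneg⟩
  replace hk : (g : (𝓞 K)ˣ) ^ k = u := congrArg Subtype.val hk
  replace hm : (g : (𝓞 K)ˣ) ^ m = -1 := congrArg Subtype.val hm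
  have hodd : Odd m := Int.not_even_iff_odd.1 fun h => h1 (hm ▸ h.isSquare_zpow _)
  rcases Int.even_or_odd k with hk' | hk'
  · exact Or.inl (hk ▸ hk'.isSquare_zpow _)
  · have hneg : -u = (g : (𝓞 K)ˣ) ^ (k + m) := by rw [zpow_add, hk, hm, mul_neg_one]
    exact Or.inr (hneg ▸ (hk'.add_odd hodd).isSquare_zpow _)

lemma isSquare_or_isSquare_neg_of_rank_eq_zero (hr : Units.rank K = 0)
    (h1 : ¬ IsSquare (-1 : (𝓞 K)ˣ)) (u : (𝓞 K)ˣ) : IsSquare u ∨ IsSquare (-u) := by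
  obtain ⟨⟨ζ, e⟩, h, -⟩ := Units.exist_unique_eq_mul_prod K u
  have : IsEmpty (Fin (Units.rank K)) := by rw [hr]; infer_instance
  rw [Finset.univ_eq_empty, Finset.prod_empty, mul_one] at h
  exact isSquare_or_isSquare_neg_of_mem_torsion h1 (h ▸ ζ.2)

lemma exists_forall_isSquare_of_rank_eq_one (hr : Units.rank K = 1)
    (h1 : ¬ IsSquare (-1 : (𝓞 K)ˣ)) : ∃ ε : (𝓞 K)ˣ, ∀ u,
      IsSquare u ∨ IsSquare (-u) ∨ IsSquare (ε * u) ∨ IsSquare (-(ε * u)) := by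
  have : Unique (Fin (Units.rank K)) := by rw [hr]; infer_instance
  refine ⟨Units.fundSystem K default, fun u => ?_⟩
  obtain ⟨⟨ζ, e⟩, h, -⟩ := Units.exist_unique_eq_mul_prod K u
  rw [Fintype.prod_unique] at h
  have hζ := isSquare_or_isSquare_neg_of_mem_torsion h1 ζ.2
  rcases Int.even_or_odd (e default) with he | he
  · have hsq := he.isSquare_zpow (Units.fundSystem K default)
    rw [h, ← neg_mul]
    exact hζ.imp (·.mul hsq) fun h => Or.inl (h.mul hsq)
  · have hsq := (he.add_odd odd_one).isSquare_zpow (Units.fundSystem K default)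
    have hmul : Units.fundSystem K default * u =
        ζ * Units.fundSystem K default ^ (e default + 1) := by
      rw [h, zpow_add_one]
      ac_rfl
    rw [hmul, ← neg_mul]
    exact Or.inr (Or.inr (hζ.imp (·.mul hsq) (·.mul hsq)))

lemma isSquare_of_rank_eq_one (hr : Units.rank K = 1) (h1 : ¬ IsSquare (-1 : (𝓞 K)ˣ))
    {η : (𝓞 K)ˣ} (hη : ¬ IsSquare η) (hη' : ¬ IsSquare (-η)) (u : (𝓞 K)ˣ) :
    IsSquare u ∨ IsSquare (-u) ∨ IsSquare (η * u) ∨ IsSquare (-(η * u)) := by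
  obtain ⟨ε, hε⟩ := exists_forall_isSquare_of_rank_eq_one hr h1
  have hcancel {a b : (𝓞 K)ˣ} (ha : IsSquare (ε * a)) (hb : IsSquare (ε * b)) :
      IsSquare (a * b) := by
    have hab : a * b = ε * a * (ε * b) / (ε * ε) := by rw [eq_div_iff_mul_eq']; ac_rfl
    exact hab ▸ (ha.mul hb).div ⟨ε, rfl⟩
  have hηε : IsSquare (ε * η) ∨ IsSquare (ε * -η) := by
    simpa only [hη, hη', false_or, mul_neg] using hε η
  rcases hε u with hu | hu | hu | hu
  · exact Or.inl hu
  · exact Or.inr (Or.inl hu)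
  · rcases hηε with h | h
    · exact Or.inr (Or.inr (Or.inl (hcancel h hu)))
    · exact Or.inr (Or.inr (Or.inr (neg_mul η u ▸ hcancel h hu)))
  · rw [← mul_neg] at hu
    rcases hηε with h | h
    · exact Or.inr (Or.inr (Or.inr (mul_neg η u ▸ hcancel h hu)))
    · exact Or.inr (Or.inr (Or.inl (neg_mul_neg η u ▸ hcancel h hu)))

lemma isTotallyComplex_of_sq_eq {x : K} {a : ℚ} (ha : a < 0) (hx : x ^ 2 = algebraMap ℚ K a) :
    IsTotallyComplex K where
  isComplex v := by
    rw [← InfinitePlace.not_isReal_iff_isComplex]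
    intro hv
    have h := congrArg (InfinitePlace.embedding_of_isReal hv) hx
    rw [map_pow, eq_ratCast, map_ratCast] at h
    exact absurd (h ▸ sq_nonneg _) (not_le.2 (Rat.cast_lt_zero.2 ha))

lemma rank_eq_of_finrank_eq [IsTotallyComplex K] {n : ℕ} (h : Module.finrank ℚ K = 2 * n) :
    Units.rank K = n - 1 := by
  have := IsTotallyComplex.finrank K
  rw [Units.rank, InfinitePlace.card_eq_nrRealPlaces_add_nrComplexPlaces,
    IsTotallyComplex.nrRealPlaces_eq_zero, zero_add]
  lia

end

section

variable {L M : Type*} [Field L] [Field M] [Algebra L M] [NumberField L] [NumberField M]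

lemma exists_norm_eq_unit_of_isSquare_mul [Algebra.IsQuadraticExtension L M] {u w : (𝓞 L)ˣ}
    (huw : IsSquare (w * u)) {α : M} (hα : Algebra.norm L α = ((u : 𝓞 L) : L))
    (hw : ∀ β : M, Algebra.norm L β = ((w : 𝓞 L) : L) →
      ∃ v : (𝓞 M)ˣ, Algebra.norm L ((v : 𝓞 M) : M) = ((w : 𝓞 L) : L)) :
    ∃ v : (𝓞 M)ˣ, Algebra.norm L ((v : 𝓞 M) : M) = ((u : 𝓞 L) : L) := by
  obtain ⟨z, hz⟩ := huw
  replace hz : ((w : 𝓞 L) : L) * (u : 𝓞 L) = ((z : 𝓞 L) : L) ^ 2 := by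
    rw [sq]
    exact congrArg (fun y : (𝓞 L)ˣ => ((y : 𝓞 L) : L)) hz
  have hz0 : ((z : 𝓞 L) : L) ≠ 0 := by simp
  have hw0 : ((w : 𝓞 L) : L) ≠ 0 := by simp
  have hnorm (c : L) : Algebra.norm L (algebraMap L M c) = c ^ 2 := by
    rw [Algebra.norm_algebraMap, Algebra.IsQuadraticExtension.finrank_eq_two]
  obtain ⟨v, hv⟩ := hw (algebraMap L M (((w : 𝓞 L) : L) / (z : 𝓞 L)) * α) (by
    rw [map_mul, hnorm, hα]
    field_simp
    linear_combination hz)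
  refine ⟨v * Units.map (algebraMap (𝓞 L) (𝓞 M)).toMonoidHom (z / w), ?_⟩
  have hcoe : (((z / w : (𝓞 L)ˣ) : 𝓞 L) : L) = (z : 𝓞 L) / (w : 𝓞 L) := by
    rw [eq_div_iff hw0]
    exact congrArg (fun y : (𝓞 L)ˣ => ((y : 𝓞 L) : L)) (div_mul_cancel z w)
  change Algebra.norm L (((v : 𝓞 M) : M) * algebraMap L M ((z / w : (𝓞 L)ˣ) : 𝓞 L)) = _
  rw [map_mul, hnorm, hv, hcoe]
  field_simp
  linear_combination -hz

lemma unitNormsLift_of_isSquare_or_isSquare_neg [Algebra.IsQuadraticExtension L M]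
    (hL : ∀ u : (𝓞 L)ˣ, IsSquare u ∨ IsSquare (-u))
    (hneg : ∀ α : M, Algebra.norm L α = -1 →
      ∃ v : (𝓞 M)ˣ, Algebra.norm L ((v : 𝓞 M) : M) = -1) : UnitNormsLift L M := by
  intro u α hα
  rcases hL u with hu | hu
  · exact exists_norm_eq_unit_of_isSquare_mul (w := 1) (by rwa [one_mul]) hα
      fun _ _ => ⟨1, by simp⟩
  · exact exists_norm_eq_unit_of_isSquare_mul (w := -1) (by rwa [neg_one_mul]) hα
      (by simpa using hneg)

end

/-! ### Absolute norms of ideals -/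

section

variable {K : Type*} [Field K]

lemma exists_coe_eq_of_sq_eq {x : K} {c : ℤ} (hx : x ^ 2 = c) :
    ∃ y : 𝓞 K, (y : K) = x ∧ y ^ 2 = c := by
  have hint : IsIntegral ℤ x := .of_pow two_pos (by rw [hx]; exact isIntegral_algebraMap)
  obtain ⟨y, rfl⟩ : ∃ y : 𝓞 K, (y : K) = x := ⟨⟨x, hint⟩, rfl⟩
  exact ⟨y, rfl, FaithfulSMul.algebraMap_injective (𝓞 K) K (by rw [map_pow, hx, map_intCast])⟩

lemma exists_two_mul_eq_one_add [CharZero K] {t : 𝓞 K} {n : ℕ} (hn : n % 4 = 3)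
    (ht : t ^ 2 = -(n : 𝓞 K)) : ∃ o : 𝓞 K, 2 * o = 1 + t := by
  obtain ⟨m, hm⟩ : 4 ∣ n + 1 := by lia
  have hm' : (n : K) + 1 = 4 * m := by exact_mod_cast hm
  have ht' : (t : K) ^ 2 = -(n : K) := by simpa using congrArg (algebraMap (𝓞 K) K) ht
  have hint : IsIntegral ℤ ((1 + (t : K)) / 2) := by
    refine ⟨Polynomial.X ^ 2 - Polynomial.X + Polynomial.C (m : ℤ), by monicity!, ?_⟩
    simp only [Polynomial.eval₂_add, Polynomial.eval₂_sub, Polynomial.eval₂_X_pow,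
      Polynomial.eval₂_X, map_natCast, Polynomial.eval₂_natCast]
    linear_combination (1 / 4 : K) * ht' - (1 / 4) * hm'
  refine ⟨⟨_, hint⟩, RingOfIntegers.ext ?_⟩
  exact mul_div_cancel₀ (1 + (t : K)) two_ne_zero

variable [NumberField K] {P : Ideal (𝓞 K)} {ℓ : ℕ}

lemma exists_absNorm_eq_pow (hP : P ≠ ⊤) (hℓ : ℓ.Prime) (h : (ℓ : 𝓞 K) ∈ P) :
    ∃ n ≠ 0, Ideal.absNorm P = ℓ ^ n := by
  have hdvd := Ideal.absNorm_dvd_absNorm_of_le ((Ideal.span_singleton_le_iff_mem (I := P)).2 h)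
  rw [Ideal.absNorm_span_natCast, Nat.dvd_prime_pow hℓ] at hdvd
  obtain ⟨n, -, hn⟩ := hdvd
  refine ⟨n, ?_, hn⟩
  rintro rfl
  exact hP (Ideal.absNorm_eq_one_iff.1 (by simpa using hn))

lemma sq_dvd_absNorm_of_not_isSquare [Fact ℓ.Prime] (hP : P ≠ ⊤) (h : (ℓ : 𝓞 K) ∈ P)
    {x : 𝓞 K} {n : ℤ} (hx : x ^ 2 = n) (hn : ¬ IsSquare (n : ZMod ℓ)) :
    ℓ ^ 2 ∣ Ideal.absNorm P := by
  have hℓ : ℓ.Prime := Fact.out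
  obtain ⟨m, hm0, hm⟩ := exists_absNorm_eq_pow hP hℓ h
  rw [hm]
  refine pow_dvd_pow _ ?_
  by_contra hlt
  obtain rfl : m = 1 := by lia
  rw [pow_one, Ideal.absNorm_apply, Submodule.cardQuot_apply] at hm
  have : Finite (𝓞 K ⧸ P) := Nat.finite_of_card_ne_zero (hm ▸ hℓ.ne_zero)
  have := Fintype.ofFinite (𝓞 K ⧸ P)
  rw [Nat.card_eq_fintype_card] at hm
  let e := ZMod.ringEquivOfPrime (𝓞 K ⧸ P) hℓ hm
  refine hn ⟨e.symm (Ideal.Quotient.mk P x), ?_⟩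
  rw [← sq, ← map_pow, ← map_pow, hx, map_intCast, map_intCast]

lemma eq_of_le_of_absNorm_dvd_absNorm {I J : Ideal (𝓞 K)} (hI : I ≠ ⊥) (h : I ≤ J)
    (hn : Ideal.absNorm I ∣ Ideal.absNorm J) : I = J := by
  obtain ⟨A, rfl⟩ := Ideal.dvd_iff_le.2 h
  rw [map_mul] at hn
  have hI' := mt Ideal.absNorm_eq_zero_iff.1 hI
  rw [map_mul] at hI'
  have hA : Ideal.absNorm A = 1 := Nat.dvd_one.1 <|
    Nat.dvd_of_mul_dvd_mul_left (Nat.pos_of_ne_zero (left_ne_zero_of_mul hI'))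
      (by rwa [mul_one])
  rw [Ideal.absNorm_eq_one_iff.1 hA, Ideal.mul_top]

lemma absNorm_span_singleton_of_sq_eq {x : 𝓞 K} {c : ℤ} (hx : x ^ 2 = c) {n : ℕ}
    (hn : Module.finrank ℚ K = 2 * n) : Ideal.absNorm (Ideal.span {x}) = c.natAbs ^ n := by
  refine Nat.pow_left_injective two_ne_zero ?_
  change Ideal.absNorm (Ideal.span {x}) ^ 2 = (c.natAbs ^ n) ^ 2
  rw [← map_pow, Ideal.span_singleton_pow, hx, Ideal.absNorm_span_singleton,
    ← eq_intCast (algebraMap ℤ (𝓞 K)), Algebra.norm_algebraMap, RingOfIntegers.rank, hn,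
    Int.natAbs_pow, ← pow_mul, mul_comm]

end

/-! ### Odd class numbers -/

section

variable {L M : Type*} [Field L] [Field M] [Algebra L M] {σ : Gal(M/L)} {P : Ideal (𝓞 M)}

lemma gal_smul_eq_neg [CharZero L] [Algebra.IsQuadraticExtension L M] (hσ : σ ≠ 1)
    {x : 𝓞 M} {a : L} (hx : (x : M) ^ 2 = algebraMap L M a)
    (ha : ¬ IsSquare a) : σ • x = -x :=
  RingOfIntegers.ext <|
    (gal_apply_eq_neg hσ hx ha).trans (map_neg (algebraMap (𝓞 M) M) x).symm

lemma mem_of_forall_sub_gal_smul_mem [NumberField M] {y : 𝓞 M} {n : ℕ} (hn : n % 4 = 3)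
    (hy : y ^ 2 = -(n : 𝓞 M)) (hσ : σ • y = -y) (hP : ∀ x, x - σ • x ∈ P) : y ∈ P := by
  obtain ⟨o, ho⟩ := exists_two_mul_eq_one_add hn hy
  have hσo : 2 * σ • o = 1 - y := by
    have h := congrArg (σ • ·) ho
    simp only [smul_mul', smul_add, smul_one, hσ, ← sub_eq_add_neg] at h
    rwa [← map_ofNat (algebraMap (𝓞 L) (𝓞 M)) 2, gal_smul_algebraMap, map_ofNat] at h
  have h2 : 2 * (o - σ • o) = 2 * y := by linear_combination ho - hσo
  exact mul_left_cancel₀ two_ne_zero h2 ▸ hP o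

end

section

variable {K : Type*} [Field K] [NumberField K] {ℓ : ℕ}

lemma natCard_classGroup_rat : Nat.card (ClassGroup (𝓞 ℚ)) = 1 := by
  rw [Nat.card_eq_fintype_card]
  exact Rat.classNumber_eq

lemma isSquare_or_isSquare_neg_unit_rat (u : (𝓞 ℚ)ˣ) : IsSquare u ∨ IsSquare (-u) := by
  refine isSquare_or_isSquare_neg_of_rank_eq_zero ?_ (fun h => ?_) u
  · rw [Units.rank, Fintype.card_eq_one_iff_nonempty_unique.2 ⟨inferInstance⟩]
  · exact not_isSquare_of_neg (by norm_num : (-1 : ℚ) < 0) (by simpa using isSquare_coe_unit h)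

lemma eq_span_singleton_of_sq_eq_neg_prime [Algebra.IsQuadraticExtension ℚ K] (hℓ : ℓ.Prime)
    {y : 𝓞 K} (hy : y ^ 2 = -(ℓ : 𝓞 K)) {P : Ideal (𝓞 K)} (hP : P ≠ ⊤) (hyP : y ∈ P) :
    P = Ideal.span {y} := by
  have hle : Ideal.span {y} ≤ P := (Ideal.span_singleton_le_iff_mem _).2 hyP
  have hn : Ideal.absNorm (Ideal.span {y}) = ℓ := by
    rw [absNorm_span_singleton_of_sq_eq (c := -ℓ) (n := 1) (by simpa using hy)
      (Algebra.IsQuadraticExtension.finrank_eq_two ℚ K)]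
    simp
  refine (eq_of_le_of_absNorm_dvd_absNorm (fun h => ?_) hle ?_).symm
  · rw [h, Ideal.absNorm_bot] at hn
    exact hℓ.ne_zero hn.symm
  · rw [hn]
    refine ((Nat.dvd_prime hℓ).1 (hn ▸ Ideal.absNorm_dvd_absNorm_of_le hle)).elim (fun h => ?_)
      fun h => h.symm.dvd
    exact absurd (Ideal.absNorm_eq_one_iff.1 h) hP

lemma odd_natCard_classGroup_of_sq_eq_neg_prime [Algebra.IsQuadraticExtension ℚ K]
    (hℓ : ℓ.Prime) (hℓ' : ℓ = 2 ∨ ℓ % 4 = 3) {y : 𝓞 K} (hy : y ^ 2 = -(ℓ : 𝓞 K)) :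
    Odd (Nat.card (ClassGroup (𝓞 K))) := by
  obtain ⟨σ, hσ⟩ := exists_gal_ne_one ℚ K
  have hℓ0 : (0 : ℚ) < ℓ := by exact_mod_cast hℓ.pos
  have hsq : (y : K) ^ 2 = algebraMap ℚ K (-ℓ) := by
    simpa using congrArg (algebraMap (𝓞 K) K) hy
  have hns : ¬ IsSquare (-ℓ : ℚ) := not_isSquare_of_neg (neg_neg_of_pos hℓ0)
  have hσy : σ • y = -y := gal_smul_eq_neg hσ hsq hns
  have hU : UnitNormsLift ℚ K := by
    refine unitNormsLift_of_isSquare_or_isSquare_neg isSquare_or_isSquare_neg_unit_rat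
      fun α hα => ?_
    obtain ⟨X, Y, h⟩ := exists_norm_eq_sq_sub_mul_sq hsq hns α
    nlinarith [sq_nonneg X, mul_nonneg hℓ0.le (sq_nonneg Y)]
  refine hU.odd_natCard_classGroup hσ (natCard_classGroup_rat ▸ odd_one)
    fun P hP _ _ hin => ⟨y, eq_span_singleton_of_sq_eq_neg_prime hℓ hy hP.ne_top ?_⟩
  rcases hℓ' with rfl | hℓ'
  · have h2y : 2 * y ∈ P := by simpa [hσy, ← two_mul] using hin y
    refine (hP.mem_or_mem h2y).elim (fun h => hP.mem_of_pow_mem 2 ?_) id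
    rw [hy]
    simpa using h
  · exact mem_of_forall_sub_gal_smul_mem hℓ' hy hσy hin

end

section

variable {F : Type*} [Field F] [NumberField F] {ℓ : ℕ} (hℓ : ℓ.Prime) {x : F}
  (hx : x ^ 2 = algebraMap ℚ F (-ℓ))

include hℓ

lemma not_isSquare_rat_neg_prime : ¬ IsSquare (-ℓ : ℚ) :=
  not_isSquare_of_neg (neg_neg_of_pos (by exact_mod_cast hℓ.pos))

include hx

lemma isQuadraticExtension_rat_adjoin_of_sq_eq_neg_prime : Algebra.IsQuadraticExtension ℚ ℚ⟮x⟯ :=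
  isQuadraticExtension_adjoin_simple_of_sq_eq hx (not_isSquare_rat_neg_prime hℓ)

lemma isSquare_or_isSquare_neg_prime_mul_of_isSquare {c : ℚ} (hc : IsSquare (c : ℚ⟮x⟯)) :
    IsSquare c ∨ IsSquare (-ℓ * c) :=
  have := isQuadraticExtension_rat_adjoin_of_sq_eq_neg_prime hℓ hx
  isSquare_or_isSquare_mul_of_isSquare_algebraMap (a := (-ℓ : ℚ)) (x := AdjoinSimple.gen ℚ x)
    (Subtype.ext hx) (not_isSquare_rat_neg_prime hℓ) (by simpa using hc)

lemma not_isSquare_neg_one_adjoin_of_sq_eq_neg_prime : ¬ IsSquare (-1 : ℚ⟮x⟯) := by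
  intro hsq
  rcases isSquare_or_isSquare_neg_prime_mul_of_isSquare hℓ hx (c := -1) (by simpa using hsq) with
    hsq | hsq
  · exact not_isSquare_of_neg (by norm_num) hsq
  · rw [mul_neg_one, neg_neg, Rat.isSquare_natCast_iff] at hsq
    exact hℓ.prime.not_isSquare hsq

lemma not_isSquare_neg_prime_adjoin_of_sq_eq_neg_prime {m : ℕ} (hm : m.Prime) (hne : ℓ ≠ m) :
    ¬ IsSquare (-m : ℚ⟮x⟯) := by
  intro hsq
  rcases isSquare_or_isSquare_neg_prime_mul_of_isSquare hℓ hx (c := -m) (by simpa using hsq) with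
    hsq | hsq
  · exact not_isSquare_rat_neg_prime hm hsq
  · rw [neg_mul_neg] at hsq
    exact not_isSquare_rat_mul_primes hℓ hm hne hsq

lemma isSquare_or_isSquare_neg_unit_adjoin_of_sq_eq_neg_prime (u : (𝓞 ℚ⟮x⟯)ˣ) :
    IsSquare u ∨ IsSquare (-u) := by
  have := isQuadraticExtension_rat_adjoin_of_sq_eq_neg_prime hℓ hx
  have : IsTotallyComplex ℚ⟮x⟯ := isTotallyComplex_of_sq_eq (x := AdjoinSimple.gen ℚ x)
    (neg_neg_of_pos (by exact_mod_cast hℓ.pos)) (Subtype.ext hx)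
  refine isSquare_or_isSquare_neg_of_rank_eq_zero (rank_eq_of_finrank_eq (n := 1)
    (Algebra.IsQuadraticExtension.finrank_eq_two _ _)) (fun hsq => ?_) u
  exact not_isSquare_neg_one_adjoin_of_sq_eq_neg_prime hℓ hx (by simpa using isSquare_coe_unit hsq)

lemma odd_natCard_classGroup_adjoin_of_sq_eq_neg_prime (hmod : ℓ = 2 ∨ ℓ % 4 = 3) :
    Odd (Nat.card (ClassGroup (𝓞 ℚ⟮x⟯))) := by
  have := isQuadraticExtension_rat_adjoin_of_sq_eq_neg_prime hℓ hx
  have hgen : AdjoinSimple.gen ℚ x ^ 2 = algebraMap ℚ ℚ⟮x⟯ (-ℓ) := Subtype.ext hx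
  obtain ⟨y, -, hy⟩ := exists_coe_eq_of_sq_eq (c := -ℓ) (by simpa using hgen)
  exact odd_natCard_classGroup_of_sq_eq_neg_prime hℓ hmod (by simpa using hy)

end

/-! ### The biquadratic field -/

/-- `L = ℚ(√-2, √-q)` for a prime `q ≡ 7 (mod 8)`, with `s = √-2` and `t = √-q`. -/
structure IsBiquad (q : ℕ) {L : Type*} [Field L] [NumberField L] (s t : 𝓞 L) : Prop where
  q_prime : q.Prime
  q_mod : q % 8 = 7
  s_sq : s ^ 2 = -2
  t_sq : t ^ 2 = -(q : 𝓞 L)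
  finrank_rat : Module.finrank ℚ L = 4

lemma isQuadraticExtension_of_finrank_eq_four {L : Type*} [Field L] [NumberField L]
    (K : IntermediateField ℚ L) [Algebra.IsQuadraticExtension ℚ K]
    (hL : Module.finrank ℚ L = 4) : Algebra.IsQuadraticExtension K L where
  finrank_eq_two' := by
    have := Module.finrank_mul_finrank ℚ K L
    rw [Algebra.IsQuadraticExtension.finrank_eq_two ℚ K] at this
    lia

lemma gal_adjoin_smul_eq {k M : Type*} [Field k] [Field M] [Algebra k M] {x : 𝓞 M}
    (σ : Gal(M/k⟮(x : M)⟯)) : σ • x = x :=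
  RingOfIntegers.ext (σ.commutes (AdjoinSimple.gen k (x : M)))

namespace IsBiquad

variable {q : ℕ} {L : Type*} [Field L] [NumberField L] {s t : 𝓞 L} (h : IsBiquad q s t)

include h

lemma s_coe_sq : (s : L) ^ 2 = algebraMap ℚ L (-2) := by
  have hsq := congrArg (algebraMap (𝓞 L) L) h.s_sq
  rw [map_pow, map_neg, map_ofNat] at hsq
  simpa using hsq

lemma t_coe_sq : (t : L) ^ 2 = algebraMap ℚ L (-q) := by
  simpa using congrArg (algebraMap (𝓞 L) L) h.t_sq

lemma isQuadraticExtension_adjoin_s : Algebra.IsQuadraticExtension ℚ⟮(s : L)⟯ L :=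
  have := isQuadraticExtension_rat_adjoin_of_sq_eq_neg_prime Nat.prime_two h.s_coe_sq
  isQuadraticExtension_of_finrank_eq_four _ h.finrank_rat

lemma not_isSquare_neg_one : ¬ IsSquare (-1 : ℚ⟮(s : L)⟯) :=
  not_isSquare_neg_one_adjoin_of_sq_eq_neg_prime Nat.prime_two h.s_coe_sq

lemma not_isSquare_neg_q : ¬ IsSquare (-q : ℚ⟮(s : L)⟯) :=
  not_isSquare_neg_prime_adjoin_of_sq_eq_neg_prime Nat.prime_two h.s_coe_sq h.q_prime
    (by have := h.q_mod; lia)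

lemma gal_smul_t {σ : Gal(L/ℚ⟮(s : L)⟯)} (hσ : σ ≠ 1) : σ • t = -t :=
  have := h.isQuadraticExtension_adjoin_s
  gal_smul_eq_neg hσ (a := -q) (by simpa using h.t_coe_sq) h.not_isSquare_neg_q

lemma norm_mul_t_sub_mul_s {x y : ℤ} (hxy : 2 * x ^ 2 - q * y ^ 2 = 1) :
    Algebra.norm ℚ⟮(s : L)⟯ ((y * t - x * s : 𝓞 L) : L) = -1 := by
  have := h.isQuadraticExtension_adjoin_s
  obtain ⟨σ, hσ⟩ := exists_gal_ne_one ℚ⟮(s : L)⟯ L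
  have hst : (y * t - x * s) * σ • (y * t - x * s) = -1 := by
    have hcast : 2 * (x : 𝓞 L) ^ 2 - q * (y : 𝓞 L) ^ 2 = 1 := by exact_mod_cast hxy
    have hint (n : ℤ) : σ • (n : 𝓞 L) = n := by
      simpa using gal_smul_algebraMap σ (n : 𝓞 ℚ⟮(s : L)⟯)
    rw [smul_sub, smul_mul', smul_mul', gal_adjoin_smul_eq, h.gal_smul_t hσ, hint, hint]
    linear_combination (x : 𝓞 L) ^ 2 * h.s_sq - (y : 𝓞 L) ^ 2 * h.t_sq - hcast
  apply (algebraMap ℚ⟮(s : L)⟯ L).injective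
  rw [algebraMap_norm_eq_mul_gal_apply hσ, ← coe_gal_smul, map_neg, map_one]
  simpa using congrArg (algebraMap (𝓞 L) L) hst

lemma exists_unit_eq : ∃ (x y : ℤ) (η : (𝓞 L)ˣ),
    2 * x ^ 2 - q * y ^ 2 = 1 ∧ (η : 𝓞 L) = y * t - x * s := by
  have := Fact.mk h.q_prime
  obtain ⟨x, y, hxy⟩ := exists_two_mul_sq_sub_mul_sq_eq_one h.q_prime h.q_mod
  have hcast : 2 * (x : 𝓞 L) ^ 2 - q * (y : 𝓞 L) ^ 2 = 1 := by exact_mod_cast hxy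
  have hunit : (y * t - x * s) * (y * t + x * s) = 1 := by
    linear_combination (y : 𝓞 L) ^ 2 * h.t_sq - (x : 𝓞 L) ^ 2 * h.s_sq + hcast
  exact ⟨x, y, .mkOfMulEqOne _ _ hunit, hxy, rfl⟩

lemma unitNormsLift : UnitNormsLift ℚ⟮(s : L)⟯ L := by
  have := h.isQuadraticExtension_adjoin_s
  refine unitNormsLift_of_isSquare_or_isSquare_neg
    (isSquare_or_isSquare_neg_unit_adjoin_of_sq_eq_neg_prime Nat.prime_two h.s_coe_sq) fun _ _ => ?_
  obtain ⟨x, y, η, hxy, hη⟩ := h.exists_unit_eq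
  exact ⟨η, by rw [hη, h.norm_mul_t_sub_mul_s hxy]⟩

lemma eq_span_t_of_mem {P : Ideal (𝓞 L)} (hP : P ≠ ⊤) (htP : t ∈ P) : P = Ideal.span {t} := by
  have := Fact.mk h.q_prime
  have hqP : (q : 𝓞 L) ∈ P := by
    simpa [h.t_sq] using P.pow_mem_of_mem htP 2 two_pos
  have hn : Ideal.absNorm (Ideal.span {t}) = q ^ 2 := by
    rw [absNorm_span_singleton_of_sq_eq (c := -q) (n := 2) (by simpa using h.t_sq) h.finrank_rat]
    simp
  refine (eq_of_le_of_absNorm_dvd_absNorm (fun h0 => ?_)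
    ((Ideal.span_singleton_le_iff_mem _).2 htP) ?_).symm
  · rw [h0, Ideal.absNorm_bot] at hn
    exact pow_ne_zero 2 h.q_prime.ne_zero hn.symm
  · rw [hn]
    exact sq_dvd_absNorm_of_not_isSquare hP hqP (n := -2) (by simpa using h.s_sq)
      (by simpa using not_isSquare_neg_two_of_mod_eight (.inr h.q_mod))

lemma odd_natCard_classGroup : Odd (Nat.card (ClassGroup (𝓞 L))) := by
  have := h.isQuadraticExtension_adjoin_s
  obtain ⟨σ, hσ⟩ := exists_gal_ne_one ℚ⟮(s : L)⟯ L
  exact h.unitNormsLift.odd_natCard_classGroup hσ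
    (odd_natCard_classGroup_adjoin_of_sq_eq_neg_prime Nat.prime_two h.s_coe_sq (.inl rfl))
    fun P hP _ _ hin => ⟨t, h.eq_span_t_of_mem hP.ne_top
      (mem_of_forall_sub_gal_smul_mem (by have := h.q_mod; lia) h.t_sq (h.gal_smul_t hσ) hin)⟩

end IsBiquad

namespace IsBiquad

variable {q : ℕ} {L : Type*} [Field L] [NumberField L] {s t : 𝓞 L} (h : IsBiquad q s t)

include h

lemma isSquare_rat_of_isSquare {c : ℚ} (hc : IsSquare (c : L)) :
    IsSquare c ∨ IsSquare (-2 * c) ∨ IsSquare (-(q : ℚ) * c) ∨ IsSquare (2 * (q : ℚ) * c) := by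
  have := h.isQuadraticExtension_adjoin_s
  have hc' : IsSquare (algebraMap ℚ⟮(s : L)⟯ L c) := by simpa using hc
  have hs {d : ℚ} := isSquare_or_isSquare_neg_prime_mul_of_isSquare Nat.prime_two h.s_coe_sq
    (c := d)
  rcases isSquare_or_isSquare_mul_of_isSquare_algebraMap (a := (-q : ℚ⟮(s : L)⟯))
    (by simpa using h.t_coe_sq) h.not_isSquare_neg_q hc' with hsq | hsq
  · exact (hs hsq).imp_right Or.inl
  · refine Or.inr (Or.inr ((hs (d := -q * c)
      (by simpa using hsq)).imp_right fun hsq => ?_))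
    convert hsq using 1
    ring

lemma not_isSquare_neg_one_unit : ¬ IsSquare (-1 : (𝓞 L)ˣ) := by
  have hq0 : (0 : ℚ) < q := by exact_mod_cast h.q_prime.pos
  intro hsq
  rcases h.isSquare_rat_of_isSquare (c := -1) (by simpa using isSquare_coe_unit hsq) with
    hsq | hsq | hsq | hsq
  · exact not_isSquare_of_neg (by norm_num) hsq
  · norm_num at hsq
  · rw [mul_neg_one, neg_neg, Rat.isSquare_natCast_iff] at hsq
    exact h.q_prime.prime.not_isSquare hsq
  · exact not_isSquare_of_neg (by linarith) hsq

lemma not_isSquare_neg_prime {p : ℕ} (hp : p.Prime) (hp2 : p ≠ 2) (hpq : p ≠ q) :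
    ¬ IsSquare (-p : L) := by
  have hp0 : (0 : ℚ) < p := by exact_mod_cast hp.pos
  have hq0 : (0 : ℚ) < q := by exact_mod_cast h.q_prime.pos
  intro hsq
  rcases h.isSquare_rat_of_isSquare (c := -p) (by simpa using hsq) with hsq | hsq | hsq | hsq
  · exact not_isSquare_of_neg (by linarith) hsq
  · rw [neg_mul_neg] at hsq
    exact not_isSquare_rat_mul_primes Nat.prime_two hp hp2.symm (by exact_mod_cast hsq)
  · rw [neg_mul_neg] at hsq
    exact not_isSquare_rat_mul_primes h.q_prime hp hpq.symm hsq
  · exact not_isSquare_of_neg (by nlinarith) hsq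

lemma rank_units_eq_one : Units.rank L = 1 := by
  have : IsTotallyComplex L := isTotallyComplex_of_sq_eq (by norm_num) h.s_coe_sq
  exact rank_eq_of_finrank_eq (n := 2) h.finrank_rat

lemma isSquare_unit {x y : ℤ} (hxy : 2 * x ^ 2 - q * y ^ 2 = 1) {η : (𝓞 L)ˣ}
    (hη : (η : 𝓞 L) = y * t - x * s) (u : (𝓞 L)ˣ) :
    IsSquare u ∨ IsSquare (-u) ∨ IsSquare (η * u) ∨ IsSquare (-(η * u)) := by
  have := h.isQuadraticExtension_adjoin_s
  have hnorm : Algebra.norm ℚ⟮(s : L)⟯ ((η : 𝓞 L) : L) = -1 := by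
    rw [hη, h.norm_mul_t_sub_mul_s hxy]
  have hnot {ε : (𝓞 L)ˣ} (hε : Algebra.norm ℚ⟮(s : L)⟯ ((ε : 𝓞 L) : L) = -1) :
      ¬ IsSquare ε := fun hsq =>
    h.not_isSquare_neg_one (hε ▸ (isSquare_coe_unit hsq).map (Algebra.norm ℚ⟮(s : L)⟯))
  refine isSquare_of_rank_eq_one h.rank_units_eq_one h.not_isSquare_neg_one_unit (hnot hnorm)
    (hnot ?_) u
  have hneg : (((-η : (𝓞 L)ˣ) : 𝓞 L) : L) = algebraMap ℚ⟮(s : L)⟯ L (-1) * (η : 𝓞 L) := by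
    simp
  rw [hneg, map_mul, Algebra.norm_algebraMap, Algebra.IsQuadraticExtension.finrank_eq_two, hnorm]
  norm_num

end IsBiquad

/-! ### The triquadratic field -/

/-- `F = L(√-p)` for `L = ℚ(√-2, √-q)`, with `s = √-2`, `t = √-q` and `r = √-p`, where the primes
`p ≡ 5 (mod 8)` and `q ≡ 7 (mod 8)` are not squares modulo each other. -/
structure IsTriquad (p q : ℕ) {L F : Type*} [Field L] [NumberField L] [Field F] [NumberField F]
    [Algebra L F] [Algebra.IsQuadraticExtension L F] (s t : 𝓞 L) (r : 𝓞 F) : Prop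
    extends IsBiquad q s t where
  p_prime : p.Prime
  p_mod : p % 8 = 5
  not_isSquare : ¬ IsSquare (p : ZMod q)
  r_sq : r ^ 2 = -(p : 𝓞 F)

namespace IsTriquad

variable {p q : ℕ} {L F : Type*} [Field L] [NumberField L] [Field F] [NumberField F] [Algebra L F]
  [Algebra.IsQuadraticExtension L F] {s t : 𝓞 L} {r : 𝓞 F} (h : IsTriquad p q s t r)

include h

lemma p_ne_q : p ≠ q := by
  have := h.p_mod
  have := h.q_mod
  lia

lemma r_coe_sq : (r : F) ^ 2 = -(p : F) := by
  simpa using congrArg (algebraMap (𝓞 F) F) h.r_sq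

lemma not_isSquare_neg_p : ¬ IsSquare (-p : L) :=
  h.toIsBiquad.not_isSquare_neg_prime h.p_prime (by have := h.p_mod; lia) h.p_ne_q

lemma gal_smul_r {σ : Gal(F/L)} (hσ : σ ≠ 1) : σ • r = -r :=
  gal_smul_eq_neg hσ (a := -p) (by simpa using h.r_coe_sq) h.not_isSquare_neg_p

lemma two_mul_q_ne_zero : ((2 * q : ℤ) : ZMod p) ≠ 0 := by
  have hp2 : ¬ p ∣ 2 := fun hdvd => by
    have := (Nat.prime_dvd_prime_iff_eq h.p_prime Nat.prime_two).1 hdvd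
    have := h.p_mod
    lia
  have hpq : ¬ p ∣ q := fun hdvd =>
    h.p_ne_q ((Nat.prime_dvd_prime_iff_eq h.p_prime h.q_prime).1 hdvd)
  rw [Ne, ZMod.intCast_zmod_eq_zero_iff_dvd]
  exact_mod_cast h.p_prime.prime.not_dvd_mul hp2 hpq

lemma isSquare_two_mul_q [Fact p.Prime] : IsSquare ((2 * q : ℤ) : ZMod p) := by
  have := Fact.mk h.q_prime
  have hpm := h.p_mod
  have hqm := h.q_mod
  have hq : ¬ IsSquare (q : ZMod p) := by
    rw [ZMod.exists_sq_eq_prime_iff_of_mod_four_eq_one (by lia) (by lia)]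
    exact h.not_isSquare
  have hsym : legendreSym p (2 * q) = 1 := by
    rw [legendreSym.mul,
      (legendreSym.eq_neg_one_iff p).2 (not_isSquare_two_of_mod_eight_eq_five hpm),
      (legendreSym.eq_neg_one_iff p).2 (by simpa using hq)]
    norm_num
  exact (legendreSym.eq_one_iff p h.two_mul_q_ne_zero).1 hsym

end IsTriquad

/-! ### Unit norms from the triquadratic field -/

namespace IsBiquad

variable {q : ℕ} {L : Type*} [Field L] [NumberField L] {s t : 𝓞 L} (h : IsBiquad q s t)

include h

lemma s_mul_t_coe_sq : ((s * t : 𝓞 L) : L) ^ 2 = algebraMap ℚ L (2 * q) := by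
  change ((s : L) * (t : L)) ^ 2 = _
  rw [mul_pow, h.s_coe_sq, h.t_coe_sq, ← map_mul, neg_mul_neg]

lemma not_isSquare_two_mul_q : ¬ IsSquare (2 * q : ℚ) := by
  exact_mod_cast not_isSquare_rat_mul_primes Nat.prime_two h.q_prime (by have := h.q_mod; lia)

lemma isQuadraticExtension_rat_adjoin_s_mul_t :
    Algebra.IsQuadraticExtension ℚ ℚ⟮((s * t : 𝓞 L) : L)⟯ :=
  isQuadraticExtension_adjoin_simple_of_sq_eq h.s_mul_t_coe_sq h.not_isSquare_two_mul_q

lemma isQuadraticExtension_adjoin_s_mul_t :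
    Algebra.IsQuadraticExtension ℚ⟮((s * t : 𝓞 L) : L)⟯ L :=
  have := h.isQuadraticExtension_rat_adjoin_s_mul_t
  isQuadraticExtension_of_finrank_eq_four _ h.finrank_rat

lemma not_isSquare_adjoin_s_mul_t_of_neg {c : ℚ} (hc : c < 0) :
    ¬ IsSquare (algebraMap ℚ ℚ⟮((s * t : 𝓞 L) : L)⟯ c) := by
  have := h.isQuadraticExtension_rat_adjoin_s_mul_t
  have hq : (0 : ℚ) < q := by exact_mod_cast h.q_prime.pos
  intro hsq
  rcases isSquare_or_isSquare_mul_of_isSquare_algebraMap (a := (2 * q : ℚ))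
    (x := AdjoinSimple.gen ℚ ((s * t : 𝓞 L) : L)) (Subtype.ext h.s_mul_t_coe_sq)
    h.not_isSquare_two_mul_q hsq with hsq | hsq
  · exact not_isSquare_of_neg hc hsq
  · exact not_isSquare_of_neg (by nlinarith) hsq

lemma norm_s : Algebra.norm ℚ⟮((s * t : 𝓞 L) : L)⟯ (s : L) = 2 := by
  have := h.isQuadraticExtension_adjoin_s_mul_t
  have hnorm := norm_algebraMap_add_algebraMap_mul (k := ℚ⟮((s * t : 𝓞 L) : L)⟯)
    (a := algebraMap ℚ _ (-2)) (h.s_coe_sq.trans (IsScalarTower.algebraMap_apply ℚ _ L (-2)))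
    (h.not_isSquare_adjoin_s_mul_t_of_neg (by norm_num)) 0 1
  simpa using hnorm

/-- Since `s` has norm `2`, twice the norm of `y * t - x * s` is the norm of
`s * (y * t - x * s) = y * (s * t) + 2 * x`, which lies in the base field. -/
lemma exists_two_mul_norm_eq_sq (x y : ℤ) : ∃ w : ℚ⟮((s * t : 𝓞 L) : L)⟯,
    2 * Algebra.norm ℚ⟮((s * t : 𝓞 L) : L)⟯ ((y * t - x * s : 𝓞 L) : L) = w ^ 2 := by
  have := h.isQuadraticExtension_adjoin_s_mul_t
  set W := ℚ⟮((s * t : 𝓞 L) : L)⟯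
  set w : W := y * AdjoinSimple.gen ℚ ((s * t : 𝓞 L) : L) + 2 * x with hw
  have hsw : s * (y * t - x * s) = y * (s * t) + 2 * x := by
    linear_combination -(x : 𝓞 L) * h.s_sq
  have hsw' : (s : L) * ((y * t - x * s : 𝓞 L) : L) = algebraMap W L w := by
    rw [hw, map_add, map_mul, map_mul, map_intCast, map_intCast, map_ofNat,
      AdjoinSimple.algebraMap_gen]
    have hcoe := congrArg (algebraMap (𝓞 L) L) hsw
    rw [map_add, map_mul, map_mul, map_mul _ (2 : 𝓞 L), map_ofNat, map_intCast, map_intCast] at hcoe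
    exact hcoe
  refine ⟨w, ?_⟩
  calc 2 * Algebra.norm W ((y * t - x * s : 𝓞 L) : L)
      = Algebra.norm W ((s : L) * ((y * t - x * s : 𝓞 L) : L)) := by rw [map_mul, h.norm_s]
    _ = w ^ 2 := by
      rw [hsw', Algebra.norm_algebraMap, Algebra.IsQuadraticExtension.finrank_eq_two]

end IsBiquad

namespace IsTriquad

variable {p q : ℕ} {L F : Type*} [Field L] [NumberField L] [Field F] [NumberField F] [Algebra L F]
  [Algebra.IsQuadraticExtension L F] {s t : 𝓞 L} {r : 𝓞 F} (h : IsTriquad p q s t r)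

include h

lemma nonempty_ringHom_adjoin_s_mul_t_padic [Fact p.Prime] :
    Nonempty (ℚ⟮((s * t : 𝓞 L) : L)⟯ →+* ℚ_[p]) := by
  have hsq := h.isSquare_two_mul_q
  obtain ⟨c, hc⟩ := exists_padicInt_sq_eq_of_isSquare_zmod (by have := h.p_mod; lia)
    h.two_mul_q_ne_zero hsq
  have hc' : (c : ℚ_[p]) ^ 2 = ((2 * q : ℤ) : ℚ_[p]) := by
    rw [← PadicInt.coe_pow, hc, PadicInt.coe_intCast]
  obtain ⟨f⟩ := nonempty_algHom_adjoin_simple_of_sq_eq (E := ℚ_[p]) (c := c) h.s_mul_t_coe_sq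
    (by simpa using hc')
  exact ⟨f⟩

lemma eq_zero_of_sq_add_mul_sq_eq_two_mul_sq {X Y Z : ℚ⟮((s * t : 𝓞 L) : L)⟯}
    (hXY : X ^ 2 + p * Y ^ 2 = 2 * Z ^ 2) : Z = 0 := by
  have := Fact.mk h.p_prime
  obtain ⟨f⟩ := h.nonempty_ringHom_adjoin_s_mul_t_padic
  have hf := congrArg f hXY
  simp only [map_add, map_mul, map_pow, map_natCast, map_ofNat] at hf
  exact f.injective (by rw [map_zero, _root_.eq_zero_of_sq_add_mul_sq_eq_two_mul_sq
    (by simpa using not_isSquare_two_of_mod_eight_eq_five h.p_mod) hf])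

lemma exists_norm_adjoin_s_mul_t_eq (z : F) : ∃ X Y : ℚ⟮((s * t : 𝓞 L) : L)⟯,
    Algebra.norm ℚ⟮((s * t : 𝓞 L) : L)⟯ (Algebra.norm L z) = X ^ 2 + p * Y ^ 2 := by
  set W := ℚ⟮((s * t : 𝓞 L) : L)⟯
  have : FiniteDimensional W F := .trans (F := W) (K := L) (A := F)
  have hp : (-p : ℚ) < 0 := neg_neg_of_pos (by exact_mod_cast h.p_prime.pos)
  obtain ⟨X, Y, hXY⟩ := exists_norm_eq_sq_sub_mul_sq (k := W) (x := (r : F))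
    (a := algebraMap ℚ W (-p)) (by simpa using h.r_coe_sq)
    (h.not_isSquare_adjoin_s_mul_t_of_neg hp) z
  exact ⟨X, Y, by rw [Algebra.norm_norm, hXY]; simp⟩

lemma norm_norm_ne {x y : ℤ} {η : (𝓞 L)ˣ} (hη : (η : 𝓞 L) = y * t - x * s) (z : F) :
    Algebra.norm ℚ⟮((s * t : 𝓞 L) : L)⟯ (Algebra.norm L z) ≠
      Algebra.norm ℚ⟮((s * t : 𝓞 L) : L)⟯ ((η : 𝓞 L) : L) := by
  intro hz
  obtain ⟨X, Y, hXY⟩ := h.exists_norm_adjoin_s_mul_t_eq z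
  obtain ⟨w, hw⟩ := h.exists_two_mul_norm_eq_sq x y
  have hw0 := h.eq_zero_of_sq_add_mul_sq_eq_two_mul_sq (X := X) (Y := Y) (Z := w / 2) (by
    rw [← hXY, hz, hη]
    linear_combination hw / 2)
  have hη0 : ((η : 𝓞 L) : L) ≠ 0 := by simp
  refine hη0 ((Algebra.norm_eq_zero_iff (R := ℚ⟮((s * t : 𝓞 L) : L)⟯)).1 ?_)
  rw [← hη, (div_eq_zero_iff.1 hw0).resolve_right two_ne_zero] at hw
  simp at hw

lemma norm_ne_unit {x y : ℤ} {η : (𝓞 L)ˣ} (hη : (η : 𝓞 L) = y * t - x * s) (z : F) :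
    Algebra.norm L z ≠ ((η : 𝓞 L) : L) :=
  fun hz => h.norm_norm_ne hη z (by rw [hz])

lemma exists_unit_norm_eq_neg_one :
    ∃ v : (𝓞 F)ˣ, Algebra.norm L ((v : 𝓞 F) : F) = -1 := by
  have := Fact.mk h.p_prime
  obtain ⟨e, f, hef⟩ := exists_sq_sub_two_mul_sq_eq_neg_one h.p_prime h.p_mod
  set w := algebraMap (𝓞 L) (𝓞 F) s * r
  have hw : w ^ 2 = 2 * p := by
    rw [mul_pow, ← map_pow, h.s_sq, h.r_sq, map_neg, map_ofNat, neg_mul_neg]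
  have hunit : (e + f * w) * (f * w - e) = 1 := by
    have hcast : (e : 𝓞 F) ^ 2 - 2 * p * (f : 𝓞 F) ^ 2 = -1 := by exact_mod_cast hef
    linear_combination (f : 𝓞 F) ^ 2 * hw - hcast
  refine ⟨.mkOfMulEqOne _ _ hunit, ?_⟩
  have hnorm := norm_algebraMap_add_algebraMap_mul (k := L) (x := (r : F)) (a := (-p : L))
    (by simpa using h.r_coe_sq) h.not_isSquare_neg_p e (f * s)
  have hs : (s : L) ^ 2 = -2 := by simpa using h.s_coe_sq
  have hcast : (e : L) ^ 2 - 2 * p * (f : L) ^ 2 = -1 := by exact_mod_cast hef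
  have heq : ((e + f * w : 𝓞 F) : F) = algebraMap L F e + algebraMap L F (f * s) * r := by
    simp only [map_mul, map_intCast, mul_assoc]
    change algebraMap (𝓞 F) F (e + f * w) = _
    simp only [map_add, map_mul, map_intCast, w]
    rfl
  change Algebra.norm L ((e + f * w : 𝓞 F) : F) = -1
  rw [heq, hnorm]
  linear_combination (p : L) * f ^ 2 * hs + hcast

lemma unitNormsLift : UnitNormsLift L F := by
  obtain ⟨x, y, η, hxy, hη⟩ := h.exists_unit_eq
  intro u α hα
  rcases h.isSquare_unit hxy hη u with hu | hu | hu | hu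
  · exact exists_norm_eq_unit_of_isSquare_mul (w := 1) (by rwa [one_mul]) hα
      fun _ _ => ⟨1, by simp⟩
  · exact exists_norm_eq_unit_of_isSquare_mul (w := -1) (by rwa [neg_one_mul]) hα
      fun _ _ => by simpa using h.exists_unit_norm_eq_neg_one
  · exact exists_norm_eq_unit_of_isSquare_mul hu hα
      fun β hβ => (h.norm_ne_unit hη β hβ).elim
  · exact exists_norm_eq_unit_of_isSquare_mul (w := -η) (by rwa [neg_mul]) hα
      fun β hβ => (h.norm_ne_unit (x := -x) (y := -y) (by simp [hη]; ring) β hβ).elim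

end IsTriquad

/-! ### The ramified primes of the triquadratic field -/

lemma sup_span_mul_sup_span_eq {R : Type*} [CommRing R] {J : Ideal R} {a b : R} (hab : a * b ∈ J)
    (htop : J ⊔ Ideal.span {a} ⊔ (J ⊔ Ideal.span {b}) = ⊤) :
    (J ⊔ Ideal.span {a}) * (J ⊔ Ideal.span {b}) = J := by
  refine le_antisymm ?_ ?_
  · rw [Ideal.sup_mul, Ideal.mul_sup, Ideal.mul_sup, Ideal.span_singleton_mul_span_singleton]
    exact sup_le (sup_le Ideal.mul_le_left Ideal.mul_le_left)
      (sup_le Ideal.mul_le_right ((Ideal.span_singleton_le_iff_mem _).2 hab))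
  · calc J = (J ⊔ Ideal.span {a} ⊔ (J ⊔ Ideal.span {b})) * J := by rw [htop, Ideal.top_mul]
      _ ≤ (J ⊔ Ideal.span {a}) * (J ⊔ Ideal.span {b}) := by
        rw [Ideal.sup_mul, mul_comm _ J, mul_comm _ J, mul_comm J]
        exact sup_le (Ideal.mul_mono_right le_sup_left) (Ideal.mul_mono_left le_sup_left)

lemma norm_eq_pow_finrank_of_sq_eq {k E : Type*} [Field k] [CharZero k] [Field E] [Algebra k E]
    [FiniteDimensional k E] {x y : E} {X Y a : k} (hy : y ^ 2 = algebraMap k E a)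
    (ha : ¬ IsSquare a) (hx : x = algebraMap k E X + algebraMap k E Y * y) :
    Algebra.norm k x = (X ^ 2 - a * Y ^ 2) ^ Module.finrank k⟮y⟯ E := by
  have := isQuadraticExtension_adjoin_simple_of_sq_eq hy ha
  have hgen : AdjoinSimple.gen k y ^ 2 = algebraMap k k⟮y⟯ a := Subtype.ext hy
  have hxmap : x = algebraMap k⟮y⟯ E
      (algebraMap k k⟮y⟯ X + algebraMap k k⟮y⟯ Y * AdjoinSimple.gen k y) := by
    rw [hx, map_add, map_mul, AdjoinSimple.algebraMap_gen]
    rfl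
  rw [← Algebra.norm_norm (S := k⟮y⟯), hxmap, Algebra.norm_algebraMap, map_pow,
    norm_algebraMap_add_algebraMap_mul hgen ha]

section

variable {K : Type*} [Field K] [NumberField K]

lemma exists_isMaximal_of_dvd_norm {ℓ : ℕ} (hℓ : ℓ.Prime) {x : 𝓞 K}
    (hx : (ℓ : ℤ) ∣ Algebra.norm ℤ x) :
    ∃ Q : Ideal (𝓞 K), Q.IsMaximal ∧ (ℓ : 𝓞 K) ∈ Q ∧ x ∈ Q := by
  have hdvd : ℓ ∣ Ideal.absNorm (Ideal.span {x}) := by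
    rw [Ideal.absNorm_span_singleton]
    exact Int.natCast_dvd.1 hx
  obtain ⟨Q, hQ, hQℓ, hQx⟩ := Ideal.exists_isMaximal_dvd_of_dvd_absNorm' hℓ _ hdvd
  have hmem : (ℓ : ℤ) ∈ Q.under ℤ := hQℓ ▸ Ideal.mem_span_singleton_self _
  exact ⟨Q, hQ, by simpa [Ideal.mem_comap] using hmem,
    (Ideal.span_singleton_le_iff_mem _).1 (Ideal.dvd_iff_le.1 hQx)⟩

/-- The norm of `x = X + Y √a` is a power of `X² - a Y²`. -/
lemma exists_isMaximal_of_sq_eq {ℓ : ℕ} (hℓ : ℓ.Prime) {x : 𝓞 K} {y : K} {X Y a : ℚ} {d : ℤ}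
    (hy : y ^ 2 = a) (ha : ¬ IsSquare a) (hx : (x : K) = X + Y * y)
    (hd : X ^ 2 - a * Y ^ 2 = ℓ * d) :
    ∃ Q : Ideal (𝓞 K), Q.IsMaximal ∧ (ℓ : 𝓞 K) ∈ Q ∧ x ∈ Q := by
  refine exists_isMaximal_of_dvd_norm hℓ ?_
  have hnorm : Algebra.norm ℤ x = (ℓ * d) ^ Module.finrank ℚ⟮y⟯ K := by
    have h := norm_eq_pow_finrank_of_sq_eq (k := ℚ) hy ha hx
    rw [hd, ← Algebra.coe_norm_int] at h
    exact_mod_cast h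
  rw [hnorm]
  exact dvd_pow (dvd_mul_right _ _) Module.finrank_pos.ne'

lemma absNorm_eq_of_mul_eq {I I' J : Ideal (𝓞 K)} {n : ℕ} (hn : n ≠ 0) (hmul : I * I' = J)
    (hJ : Ideal.absNorm J = n ^ 2) (hI : n ∣ Ideal.absNorm I) (hI' : n ∣ Ideal.absNorm I') :
    Ideal.absNorm I = n := by
  obtain ⟨a, ha⟩ := hI
  obtain ⟨b, hb⟩ := hI'
  rw [← hmul, map_mul, ha, hb] at hJ
  have hab : a * b = 1 :=
    Nat.eq_of_mul_eq_mul_left (pow_pos (Nat.pos_of_ne_zero hn) 2) (by linear_combination hJ)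
  rw [ha, Nat.eq_one_of_mul_eq_one_right hab, mul_one]

lemma eq_sup_span_or_eq_sup_span {J Q : Ideal (𝓞 K)} {a b : 𝓞 K} {n : ℕ} (hn : n ≠ 0)
    (hab : a * b ∈ J) (ha : Ideal.absNorm (J ⊔ Ideal.span {a}) = n)
    (hb : Ideal.absNorm (J ⊔ Ideal.span {b}) = n) (hQ : Q.IsPrime) (hJQ : J ≤ Q)
    (hnQ : n ∣ Ideal.absNorm Q) : Q = J ⊔ Ideal.span {a} ∨ Q = J ⊔ Ideal.span {b} := by
  have heq : ∀ c, c ∈ Q → Ideal.absNorm (J ⊔ Ideal.span {c}) = n → Q = J ⊔ Ideal.span {c} := by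
    intro c hc hcn
    refine (eq_of_le_of_absNorm_dvd_absNorm (fun h0 => ?_)
      (sup_le hJQ ((Ideal.span_singleton_le_iff_mem _).2 hc)) (by rwa [hcn])).symm
    rw [h0, Ideal.absNorm_bot] at hcn
    exact hn hcn.symm
  exact (hQ.mem_or_mem (hJQ hab)).imp (heq a · ha) (heq b · hb)

end

/-- For `r² = -p` and `w² ≡ c² (mod p)`, the ideal over `p` generated by `r` and `w - c`. -/
def idealOverP {A B : Type*} [CommRing A] [CommRing B] [Algebra A B] (r : B) (w : A) (c : ℤ) :
    Ideal B :=
  Ideal.span {r} ⊔ Ideal.span {algebraMap A B w - c}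

namespace IsTriquad

variable {p q : ℕ} {L F : Type*} [Field L] [NumberField L] [Field F] [NumberField F] [Algebra L F]
  [Algebra.IsQuadraticExtension L F] {s t : 𝓞 L} {r : 𝓞 F} (h : IsTriquad p q s t r)

include h

lemma finrank_rat_F : Module.finrank ℚ F = 2 * 4 := by
  rw [← Module.finrank_mul_finrank ℚ L F, h.finrank_rat,
    Algebra.IsQuadraticExtension.finrank_eq_two]

lemma r_ne_zero : r ≠ 0 := by
  rintro rfl
  simpa [h.p_prime.ne_zero] using h.r_sq

lemma p_mem {Q : Ideal (𝓞 F)} (hrQ : r ∈ Q) : (p : 𝓞 F) ∈ Q := by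
  have hsq := Q.neg_mem (Q.pow_mem_of_mem hrQ 2 two_pos)
  rwa [h.r_sq, neg_neg] at hsq

lemma w_sq : algebraMap (𝓞 L) (𝓞 F) (s * t) ^ 2 = 2 * q := by
  rw [← map_pow, mul_pow, h.s_sq, h.t_sq, neg_mul_neg, map_mul, map_ofNat, map_natCast]

lemma w_coe_sq : ((algebraMap (𝓞 L) (𝓞 F) (s * t) : 𝓞 F) : F) ^ 2 = ((2 * q : ℚ) : F) := by
  have hcoe := congrArg (algebraMap (𝓞 F) F) h.w_sq
  rw [map_pow, map_mul _ 2, map_ofNat, map_natCast] at hcoe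
  exact_mod_cast hcoe

lemma sq_dvd_absNorm_of_r_mem {Q : Ideal (𝓞 F)} (hQ : Q ≠ ⊤) (hrQ : r ∈ Q) :
    p ^ 2 ∣ Ideal.absNorm Q := by
  have := Fact.mk h.p_prime
  exact sq_dvd_absNorm_of_not_isSquare hQ (h.p_mem hrQ)
    (x := algebraMap (𝓞 L) (𝓞 F) s) (n := -2)
    (by rw [← map_pow, h.s_sq, map_neg, map_ofNat]; simp)
    (not_isSquare_neg_two_of_mod_eight (Or.inl h.p_mod))

lemma absNorm_span_r : Ideal.absNorm (Ideal.span {r}) = (p ^ 2) ^ 2 := by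
  rw [absNorm_span_singleton_of_sq_eq (c := -p) (by simpa using h.r_sq) h.finrank_rat_F,
    ← pow_mul, Int.natAbs_neg, Int.natAbs_natCast]

variable {c : ℤ} (hc : (p : ℤ) ∣ c ^ 2 - 2 * q)

include hc

lemma idealOverP_ne_top : idealOverP r (s * t) c ≠ ⊤ := by
  obtain ⟨d, hd⟩ := hc
  have hd' : (c : ℚ) ^ 2 - 2 * q = p * d := by exact_mod_cast hd
  obtain ⟨Q, hQ, hpQ, hwQ⟩ := exists_isMaximal_of_sq_eq h.p_prime
    (x := algebraMap (𝓞 L) (𝓞 F) (s * t) - (c : 𝓞 F)) (X := -c) (Y := 1) (d := d) h.w_coe_sq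
    (by exact_mod_cast h.not_isSquare_two_mul_q) (by simp; ring) (by linear_combination hd')
  have hrQ : r ∈ Q := hQ.isPrime.mem_of_pow_mem 2 (by rw [h.r_sq]; exact Q.neg_mem hpQ)
  refine fun htop => hQ.ne_top (top_le_iff.1 (htop ▸ sup_le ?_ ?_))
  exacts [(Ideal.span_singleton_le_iff_mem _).2 hrQ, (Ideal.span_singleton_le_iff_mem _).2 hwQ]

lemma w_sub_mul_w_sub_mem :
    (algebraMap (𝓞 L) (𝓞 F) (s * t) - c) * (algebraMap (𝓞 L) (𝓞 F) (s * t) - (-c : ℤ)) ∈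
      Ideal.span {r} := by
  obtain ⟨d, hd⟩ := hc
  have hd' : (c : 𝓞 F) ^ 2 - 2 * q = p * d := by exact_mod_cast hd
  refine Ideal.mem_span_singleton.2 ⟨r * d, ?_⟩
  rw [Int.cast_neg]
  linear_combination h.w_sq - hd' - d * h.r_sq

/-- `p` is coprime to `8q`, which lies in the sum of the two ideals because `4c² ≡ 8q (mod p)`. -/
lemma idealOverP_sup_idealOverP_neg :
    idealOverP r (s * t) c ⊔ idealOverP r (s * t) (-c) = ⊤ := by
  set I := idealOverP r (s * t) c ⊔ idealOverP r (s * t) (-c)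
  have hr : r ∈ I :=
    (le_sup_left.trans le_sup_left : Ideal.span {r} ≤ I) (Ideal.mem_span_singleton_self r)
  have hwc : algebraMap (𝓞 L) (𝓞 F) (s * t) - c ∈ I :=
    (le_sup_right.trans le_sup_left : Ideal.span {_} ≤ I) (Ideal.mem_span_singleton_self _)
  have hwc' : algebraMap (𝓞 L) (𝓞 F) (s * t) - (-c : ℤ) ∈ I :=
    (le_sup_right.trans le_sup_right : Ideal.span {_} ≤ I) (Ideal.mem_span_singleton_self _)
  obtain ⟨d, hd⟩ := hc
  have hd' : (c : 𝓞 F) ^ 2 - 2 * q = p * d := by exact_mod_cast hd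
  have hcop : Nat.Coprime p (8 * q) := by
    refine Nat.Coprime.mul_right ?_ ((Nat.coprime_primes h.p_prime h.q_prime).2 h.p_ne_q)
    refine Nat.Coprime.pow_right 3 ((Nat.coprime_primes h.p_prime Nat.prime_two).2 ?_)
    have := h.p_mod
    lia
  have h8q : ((8 * q : ℕ) : 𝓞 F) = ((algebraMap (𝓞 L) (𝓞 F) (s * t) - (-c : ℤ)) -
      (algebraMap (𝓞 L) (𝓞 F) (s * t) - c)) * (2 * c) - p * (4 * d) := by
    rw [Int.cast_neg, Nat.cast_mul, Nat.cast_ofNat]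
    linear_combination -4 * hd'
  obtain ⟨x, y, hxy⟩ := hcop.cast (R := 𝓞 F)
  rw [Ideal.eq_top_iff_one, ← hxy, h8q]
  exact I.add_mem (I.mul_mem_left _ (h.p_mem hr)) <| I.mul_mem_left _ <|
    I.sub_mem (I.mul_mem_right _ (I.sub_mem hwc' hwc)) (I.mul_mem_right _ (h.p_mem hr))

lemma idealOverP_mul_idealOverP_neg :
    idealOverP r (s * t) c * idealOverP r (s * t) (-c) = Ideal.span {r} :=
  sup_span_mul_sup_span_eq (h.w_sub_mul_w_sub_mem hc) (h.idealOverP_sup_idealOverP_neg hc)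

lemma absNorm_idealOverP : Ideal.absNorm (idealOverP r (s * t) c) = p ^ 2 := by
  have hdvd : ∀ {c : ℤ}, (p : ℤ) ∣ c ^ 2 - 2 * q →
      p ^ 2 ∣ Ideal.absNorm (idealOverP r (s * t) c) := fun hc =>
    h.sq_dvd_absNorm_of_r_mem (h.idealOverP_ne_top hc)
      (Ideal.mem_sup_left (Ideal.mem_span_singleton_self r))
  exact absNorm_eq_of_mul_eq (pow_ne_zero 2 h.p_prime.ne_zero)
    (h.idealOverP_mul_idealOverP_neg hc) h.absNorm_span_r (hdvd hc) (hdvd (by rwa [neg_sq]))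

lemma eq_idealOverP_or_eq_idealOverP_neg {Q : Ideal (𝓞 F)} (hQ : Q.IsPrime) (hrQ : r ∈ Q) :
    Q = idealOverP r (s * t) c ∨ Q = idealOverP r (s * t) (-c) :=
  eq_sup_span_or_eq_sup_span (pow_ne_zero 2 h.p_prime.ne_zero) (h.w_sub_mul_w_sub_mem hc)
    (h.absNorm_idealOverP hc) (h.absNorm_idealOverP (by rwa [neg_sq])) hQ
    ((Ideal.span_singleton_le_iff_mem _).2 hrQ) (h.sq_dvd_absNorm_of_r_mem hQ.ne_top hrQ)

omit hc in
lemma gal_smul_idealOverP {σ : Gal(F/L)} (hσ : σ ≠ 1) (c : ℤ) :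
    σ • idealOverP r (s * t) c = idealOverP r (s * t) c := by
  have hw : σ • (algebraMap (𝓞 L) (𝓞 F) (s * t) - c) = algebraMap (𝓞 L) (𝓞 F) (s * t) - c := by
    rw [smul_sub, gal_smul_algebraMap, ← map_intCast (algebraMap (𝓞 L) (𝓞 F)) c,
      gal_smul_algebraMap]
  rw [idealOverP, Ideal.smul_sup, smul_span_singleton, smul_span_singleton, h.gal_smul_r hσ, hw,
    Ideal.span_singleton_neg]

end IsTriquad

lemma two_dvd_absNorm {K : Type*} [Field K] [NumberField K] {Q : Ideal (𝓞 K)} (hQ : Q ≠ ⊤)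
    (h2Q : 2 ∈ Q) : 2 ∣ Ideal.absNorm Q := by
  obtain ⟨n, hn, hQn⟩ := exists_absNorm_eq_pow hQ Nat.prime_two (by simpa using h2Q)
  exact hQn ▸ dvd_pow_self 2 hn

/-- For `r² = -p` and `s * l = r - 1`, the ideal over `2` generated by `s` and `l - 1`, whose square
is generated by `s`. -/
def idealOverTwo {A B : Type*} [CommRing A] [CommRing B] [Algebra A B] (s : A) (l : B) : Ideal B :=
  Ideal.span {algebraMap A B s} ⊔ Ideal.span {l - 1}

/-- For `(2 * o - 1)² = -q`, one of the two prime factors of `idealOverTwo s l`; the other one is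
`primeOverTwo s l (1 - o)`. -/
def primeOverTwo {A B : Type*} [CommRing A] [CommRing B] [Algebra A B] (s : A) (l : B) (o : A) :
    Ideal B :=
  idealOverTwo s l ⊔ Ideal.span {algebraMap A B o}

lemma algebraMap_mem_idealOverTwo {A B : Type*} [CommRing A] [CommRing B] [Algebra A B] (s : A)
    (l : B) : algebraMap A B s ∈ idealOverTwo s l :=
  Ideal.mem_sup_left (Ideal.mem_span_singleton_self _)

namespace IsTriquad

variable {p q : ℕ} {L F : Type*} [Field L] [NumberField L] [Field F] [NumberField F] [Algebra L F]
  [Algebra.IsQuadraticExtension L F] {s t : 𝓞 L} {r : 𝓞 F} (h : IsTriquad p q s t r)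

include h

lemma s_ne_zero : algebraMap (𝓞 L) (𝓞 F) s ≠ 0 := by
  intro h0
  have hsq := congrArg (algebraMap (𝓞 L) (𝓞 F)) h.s_sq
  rw [map_pow, h0, map_neg, map_ofNat] at hsq
  norm_num at hsq

lemma map_s_sq : algebraMap (𝓞 L) (𝓞 F) s ^ 2 = -2 := by
  rw [← map_pow, h.s_sq, map_neg, map_ofNat]

lemma s_coe_coe_sq : ((algebraMap (𝓞 L) (𝓞 F) s : 𝓞 F) : F) ^ 2 = -2 := by
  have hsq := congrArg (algebraMap (𝓞 F) F) h.map_s_sq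
  rwa [map_pow, map_neg, map_ofNat] at hsq

lemma exists_s_mul_eq_r_sub_one : ∃ l : 𝓞 F, algebraMap (𝓞 L) (𝓞 F) s * l = r - 1 := by
  obtain ⟨k, hk⟩ : ∃ k, p = 8 * k + 5 := ⟨p / 8, by have := h.p_mod; lia⟩
  have hs : ((algebraMap (𝓞 L) (𝓞 F) s : 𝓞 F) : F) ≠ 0 :=
    RingOfIntegers.coe_ne_zero_iff.2 h.s_ne_zero
  have hr2 : (r : F) ^ 2 = -(8 * k + 5) := by
    rw [h.r_coe_sq, hk]
    push_cast
    ring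
  have hsq : ((r - 1 : F) / (algebraMap (𝓞 L) (𝓞 F) s : 𝓞 F)) ^ 2 =
      ((4 * k + 2 + r : 𝓞 F) : F) := by
    change _ = algebraMap (𝓞 F) F (4 * k + 2 + r)
    rw [map_add, map_add, map_mul, map_ofNat, map_ofNat, map_natCast, div_pow,
      h.s_coe_coe_sq]
    linear_combination -hr2 / 2
  have hint : IsIntegral ℤ ((r - 1 : F) / (algebraMap (𝓞 L) (𝓞 F) s : 𝓞 F)) :=
    .of_pow two_pos (hsq ▸ RingOfIntegers.isIntegral_coe _)
  refine ⟨⟨_, hint⟩, RingOfIntegers.ext ?_⟩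
  exact (mul_div_cancel₀ _ hs).trans (map_sub (algebraMap (𝓞 F) F) r 1).symm

lemma two_mem_iff_s_mem {Q : Ideal (𝓞 F)} (hQ : Q.IsPrime) :
    2 ∈ Q ↔ algebraMap (𝓞 L) (𝓞 F) s ∈ Q := by
  rw [← neg_mem_iff, ← h.map_s_sq, hQ.pow_mem_iff_mem 2 two_pos]

lemma two_mem_idealOverTwo (l : 𝓞 F) : 2 ∈ idealOverTwo s l := by
  rw [← neg_mem_iff, ← h.map_s_sq]
  exact Ideal.pow_mem_of_mem _ (algebraMap_mem_idealOverTwo s l) 2 two_pos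

lemma mul_one_sub_mem_idealOverTwo {o : 𝓞 L} (ho : (2 * o - 1) ^ 2 = -(q : 𝓞 L)) (l : 𝓞 F) :
    algebraMap (𝓞 L) (𝓞 F) o * algebraMap (𝓞 L) (𝓞 F) (1 - o) ∈ idealOverTwo s l := by
  obtain ⟨m, hm⟩ : 8 ∣ q + 1 := by have := h.q_mod; lia
  have hm' : (q : 𝓞 L) + 1 = 8 * m := by exact_mod_cast hm
  have ho2 : o * (1 - o) = 2 * m := by
    refine mul_left_cancel₀ (show (4 : 𝓞 L) ≠ 0 by norm_num) ?_
    linear_combination hm' - ho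
  rw [← map_mul, ho2, map_mul, map_ofNat]
  exact Ideal.mul_mem_right _ _ (h.two_mem_idealOverTwo l)

lemma primeOverTwo_mul {o : 𝓞 L} (ho : (2 * o - 1) ^ 2 = -(q : 𝓞 L)) (l : 𝓞 F) :
    primeOverTwo s l o * primeOverTwo s l (1 - o) = idealOverTwo s l := by
  refine sup_span_mul_sup_span_eq (h.mul_one_sub_mem_idealOverTwo ho l) ?_
  have hone : (1 : 𝓞 F) =
      algebraMap (𝓞 L) (𝓞 F) o + algebraMap (𝓞 L) (𝓞 F) (1 - o) := by
    rw [← map_add, add_sub_cancel, map_one]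
  rw [Ideal.eq_top_iff_one, hone]
  exact Ideal.add_mem _
    (Ideal.mem_sup_left (Ideal.mem_sup_right (Ideal.mem_span_singleton_self _)))
    (Ideal.mem_sup_right (Ideal.mem_sup_right (Ideal.mem_span_singleton_self _)))

section

variable {l : 𝓞 F} (hl : algebraMap (𝓞 L) (𝓞 F) s * l = r - 1)

include hl

lemma exists_l_sub_one_sq_eq : ∃ k : ℤ, (l - 1) ^ 2 = algebraMap (𝓞 L) (𝓞 F) s * (l - 1) +
    algebraMap (𝓞 L) (𝓞 F) s + algebraMap (𝓞 L) (𝓞 F) s ^ 2 * (l - k) := by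
  obtain ⟨k, hk⟩ : ∃ k, p = 8 * k + 5 := ⟨p / 8, by have := h.p_mod; lia⟩
  have hs := h.map_s_sq
  have hr : r ^ 2 = -(8 * k + 5) := by
    rw [h.r_sq, hk]
    push_cast
    ring
  have hl2 : l ^ 2 = 4 * k + 3 + algebraMap (𝓞 L) (𝓞 F) s * l := by
    refine mul_left_cancel₀ (pow_ne_zero 2 h.s_ne_zero) ?_
    linear_combination (algebraMap (𝓞 L) (𝓞 F) s * l + r + 1) * hl + hr -
      (4 * k + 3 + algebraMap (𝓞 L) (𝓞 F) s * l) * hs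
  refine ⟨2 * (k + 1), ?_⟩
  push_cast
  linear_combination hl2 - (l - 2 * (k + 1)) * hs

lemma idealOverTwo_sq : idealOverTwo s l ^ 2 = Ideal.span {algebraMap (𝓞 L) (𝓞 F) s} := by
  obtain ⟨k, hk⟩ := h.exists_l_sub_one_sq_eq hl
  set S := algebraMap (𝓞 L) (𝓞 F) s
  have hS : S ∈ idealOverTwo s l := algebraMap_mem_idealOverTwo s l
  have hl1 : l - 1 ∈ idealOverTwo s l := Ideal.mem_sup_right (Ideal.mem_span_singleton_self _)
  refine le_antisymm ?_ ?_
  · have hdvd : S ∣ (l - 1) * (l - 1) := ⟨(l - 1) + 1 + S * (l - k), by linear_combination hk⟩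
    rw [sq, idealOverTwo, Ideal.sup_mul, Ideal.mul_sup, Ideal.mul_sup,
      Ideal.span_singleton_mul_span_singleton (l - 1) (l - 1)]
    exact sup_le (sup_le Ideal.mul_le_left Ideal.mul_le_left)
      (sup_le Ideal.mul_le_right (Ideal.span_singleton_le_span_singleton.2 hdvd))
  · have heq : S = (l - 1) * (l - 1) - S * (l - 1) - S * S * (l - k) := by
      linear_combination -hk
    rw [Ideal.span_singleton_le_iff_mem, heq, sq]
    exact Ideal.sub_mem _ (Ideal.sub_mem _ (Ideal.mul_mem_mul hl1 hl1)
      (Ideal.mul_mem_mul hS hl1)) (Ideal.mul_mem_right _ _ (Ideal.mul_mem_mul hS hS))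

lemma absNorm_idealOverTwo : Ideal.absNorm (idealOverTwo s l) = 2 ^ 2 := by
  refine Nat.pow_left_injective two_ne_zero ?_
  change Ideal.absNorm (idealOverTwo s l) ^ 2 = (2 ^ 2) ^ 2
  rw [← map_pow, h.idealOverTwo_sq hl, absNorm_span_singleton_of_sq_eq (c := -2)
    (by rw [h.map_s_sq]; simp) h.finrank_rat_F]
  rfl

lemma idealOverTwo_le_iff {Q : Ideal (𝓞 F)} (hQ : Q.IsPrime) : idealOverTwo s l ≤ Q ↔ 2 ∈ Q := by
  rw [h.two_mem_iff_s_mem hQ, ← Ideal.span_singleton_le_iff_mem, ← h.idealOverTwo_sq hl]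
  exact ⟨(Ideal.pow_le_self two_ne_zero).trans, Ideal.IsPrime.le_of_pow_le⟩

lemma idealOverTwo_ne_bot : idealOverTwo s l ≠ ⊥ := fun h0 => by
  have hn := h.absNorm_idealOverTwo hl
  simp [h0] at hn

lemma gal_smul_idealOverTwo (σ : Gal(F/L)) : σ • idealOverTwo s l = idealOverTwo s l := by
  refine pow_left_injective two_ne_zero ?_
  change (σ • idealOverTwo s l) ^ 2 = idealOverTwo s l ^ 2
  rw [← smul_pow', h.idealOverTwo_sq hl, smul_span_singleton, gal_smul_algebraMap]

lemma primeOverTwo_ne_top {o : 𝓞 L} (ho : (2 * o - 1) ^ 2 = -(q : 𝓞 L)) :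
    primeOverTwo s l o ≠ ⊤ := by
  obtain ⟨m, hm⟩ : 8 ∣ q + 1 := by have := h.q_mod; lia
  have hm' : (q : ℚ) + 1 = 8 * m := by exact_mod_cast hm
  have hy : (2 * ((algebraMap (𝓞 L) (𝓞 F) o : 𝓞 F) : F) - 1) ^ 2 = ((-q : ℚ) : F) := by
    have hcoe := congrArg (algebraMap (𝓞 F) F) (congrArg (algebraMap (𝓞 L) (𝓞 F)) ho)
    rw [map_pow, map_sub, map_mul, map_ofNat, map_pow, map_sub, map_mul _ 2, map_ofNat] at hcoe
    simpa using hcoe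
  obtain ⟨Q, hQ, h2Q, hoQ⟩ := exists_isMaximal_of_sq_eq Nat.prime_two
    (x := algebraMap (𝓞 L) (𝓞 F) o) (X := 1 / 2) (Y := 1 / 2) (d := m) hy
    (not_isSquare_of_neg (neg_neg_of_pos (by exact_mod_cast h.q_prime.pos)))
    (by push_cast; ring) (by push_cast; linear_combination hm' / 4)
  have hJQ := (h.idealOverTwo_le_iff hl hQ.isPrime).2 (by simpa using h2Q)
  refine fun htop => hQ.ne_top (top_le_iff.1 (htop ▸ sup_le hJQ ?_))
  exact (Ideal.span_singleton_le_iff_mem _).2 hoQ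

section

variable {o : 𝓞 L} (ho : (2 * o - 1) ^ 2 = -(q : 𝓞 L))

include ho

lemma absNorm_primeOverTwo : Ideal.absNorm (primeOverTwo s l o) = 2 := by
  have hdvd : ∀ {o : 𝓞 L}, (2 * o - 1) ^ 2 = -(q : 𝓞 L) →
      2 ∣ Ideal.absNorm (primeOverTwo s l o) := fun ho =>
    two_dvd_absNorm (h.primeOverTwo_ne_top hl ho) (Ideal.mem_sup_left (h.two_mem_idealOverTwo l))
  exact absNorm_eq_of_mul_eq two_ne_zero (h.primeOverTwo_mul ho l) (h.absNorm_idealOverTwo hl)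
    (hdvd ho) (hdvd (by linear_combination ho))

lemma eq_primeOverTwo_or_eq_primeOverTwo_one_sub {Q : Ideal (𝓞 F)} (hQ : Q.IsPrime)
    (h2Q : 2 ∈ Q) : Q = primeOverTwo s l o ∨ Q = primeOverTwo s l (1 - o) :=
  eq_sup_span_or_eq_sup_span two_ne_zero (h.mul_one_sub_mem_idealOverTwo ho l)
    (h.absNorm_primeOverTwo hl ho) (h.absNorm_primeOverTwo hl (by linear_combination ho)) hQ
    ((h.idealOverTwo_le_iff hl hQ).2 h2Q) (two_dvd_absNorm hQ.ne_top h2Q)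

omit ho in
lemma gal_smul_primeOverTwo (σ : Gal(F/L)) (o : 𝓞 L) :
    σ • primeOverTwo s l o = primeOverTwo s l o := by
  rw [primeOverTwo, Ideal.smul_sup, smul_span_singleton, h.gal_smul_idealOverTwo hl,
    gal_smul_algebraMap]

end

end

end IsTriquad

lemma exists_mul_eq_span_and_sq_eq_span {R : Type*} [CommRing R] [IsDedekindDomain R] {J : Ideal R}
    (hJ : J ≠ ⊥) {x m : R} (h : Ideal.span {x} ^ 2 = J ^ 2 * Ideal.span {m}) :
    ∃ D : Ideal R, J * D = Ideal.span {x} ∧ D ^ 2 = Ideal.span {m} := by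
  obtain ⟨D, hD⟩ : J ∣ Ideal.span {x} :=
    (UniqueFactorizationMonoid.pow_dvd_pow_iff_dvd two_ne_zero).1 ⟨_, h⟩
  rw [hD, mul_pow] at h
  exact ⟨D, hD.symm, mul_left_cancel₀ (pow_ne_zero 2 hJ) h⟩

lemma odd_of_mul_sq_sub_mul_sq_eq_neg_two {m n a b : ℤ} (hm : Odd m)
    (hab : m * a ^ 2 - n * b ^ 2 = -2) : Odd b := by
  by_contra hb
  obtain ⟨d, rfl⟩ := Int.not_odd_iff_even.1 hb
  have heven : Even (m * a ^ 2) := ⟨2 * (n * d ^ 2) - 1, by linear_combination hab⟩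
  obtain ⟨c, rfl⟩ : Even a :=
    (Int.even_pow.1 ((Int.even_mul.1 heven).resolve_left (Int.not_even_iff_odd.2 hm))).1
  have : 4 * (m * c ^ 2 - n * d ^ 2) = -2 := by linear_combination hab
  lia

/-- Both sides of `s * η * μ = 2 - b * (s * t)` can be divided by `s`, and the Pell unit `η` removes
the remaining factor over `2`. -/
lemma IsBiquad.exists_unit_mul_eq {q : ℕ} {L : Type*} [Field L] [NumberField L] {s t : 𝓞 L}
    (h : IsBiquad q s t) (b : ℤ) : ∃ (η : (𝓞 L)ˣ) (μ ν : 𝓞 L),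
      s * η * μ = 2 - b * (s * t) ∧ μ * ν = 2 - q * b ^ 2 := by
  obtain ⟨x, y, η, hxy, hη⟩ := h.exists_unit_eq
  have hxy' : 2 * (x : 𝓞 L) ^ 2 - q * (y : 𝓞 L) ^ 2 = 1 := by exact_mod_cast hxy
  have hst : (s * t) ^ 2 = 2 * q := by rw [mul_pow, h.s_sq, h.t_sq, neg_mul_neg]
  refine ⟨η, 2 * x + b * q * y - (y + x * b) * (s * t), 2 * x + b * q * y + (y + x * b) * (s * t),
    ?_, ?_⟩
  · rw [hη]
    linear_combination (-x * (2 * x + b * q * y - (y + x * b) * (s * t))) * h.s_sq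
      - y * (y + x * b) * hst + (2 - b * (s * t)) * hxy'
  · linear_combination -(y + x * b : 𝓞 L) ^ 2 * hst + (2 - q * (b : 𝓞 L) ^ 2) * hxy'

namespace IsTriquad

variable {p q : ℕ} {L F : Type*} [Field L] [NumberField L] [Field F] [NumberField F] [Algebra L F]
  [Algebra.IsQuadraticExtension L F] {s t : 𝓞 L} {r : 𝓞 F} (h : IsTriquad p q s t r)

include h

lemma map_t_sq : algebraMap (𝓞 L) (𝓞 F) t ^ 2 = -(q : 𝓞 F) := by
  rw [← map_pow, h.t_sq, map_neg, map_natCast]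

section

variable {a b : ℤ} (hab : p * a ^ 2 - q * b ^ 2 = -2)

include hab

lemma odd_two_sub : Odd (2 - q * b ^ 2) := by
  have hp : Odd (p : ℤ) := Int.odd_iff.2 (by have := h.p_mod; lia)
  have hq : Odd (q : ℤ) := Int.odd_iff.2 (by have := h.q_mod; lia)
  exact even_two.sub_odd (hq.mul (odd_of_mul_sq_sub_mul_sq_eq_neg_two hp hab).pow)

lemma exists_s_mul_eq_mul_t_sub_mul_r : ∃ θ : 𝓞 F,
    algebraMap (𝓞 L) (𝓞 F) s * θ = b * algebraMap (𝓞 L) (𝓞 F) t - a * r := by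
  have hs : ((algebraMap (𝓞 L) (𝓞 F) s : 𝓞 F) : F) ≠ 0 :=
    RingOfIntegers.coe_ne_zero_iff.2 h.s_ne_zero
  have hs2 : ((algebraMap (𝓞 L) (𝓞 F) s : 𝓞 F) : F) ^ 2 = -2 := by
    have hcoe := congrArg (algebraMap (𝓞 F) F) h.map_s_sq
    rwa [map_pow, map_neg, map_ofNat] at hcoe
  have ht2 : ((algebraMap (𝓞 L) (𝓞 F) t : 𝓞 F) : F) ^ 2 = -(q : F) := by
    simpa using congrArg (algebraMap (𝓞 F) F) h.map_t_sq
  have hab' : (p * a ^ 2 - q * b ^ 2 : F) = -2 := by exact_mod_cast hab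
  have hsq : ((b * (algebraMap (𝓞 L) (𝓞 F) t : 𝓞 F) - a * r : F) /
      (algebraMap (𝓞 L) (𝓞 F) s : 𝓞 F)) ^ 2 =
        algebraMap (𝓞 F) F (p * a ^ 2 + 1 + a * b * (r * algebraMap (𝓞 L) (𝓞 F) t)) := by
    simp only [map_add, map_mul, map_pow, map_natCast, map_intCast, map_one]
    rw [div_pow, hs2]
    linear_combination -hab' / 2 - b ^ 2 / 2 * ht2 - a ^ 2 / 2 * h.r_coe_sq
  have hint : IsIntegral ℤ ((b * (algebraMap (𝓞 L) (𝓞 F) t : 𝓞 F) - a * r : F) /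
      (algebraMap (𝓞 L) (𝓞 F) s : 𝓞 F)) :=
    .of_pow two_pos (hsq ▸ RingOfIntegers.isIntegral_coe _)
  refine ⟨⟨_, hint⟩, RingOfIntegers.ext ?_⟩
  refine (mul_div_cancel₀ _ hs).trans (Eq.symm ?_)
  change algebraMap (𝓞 F) F _ = _
  rw [map_sub, map_mul, map_mul, map_intCast, map_intCast]

variable {θ : 𝓞 F} (hθ : algebraMap (𝓞 L) (𝓞 F) s * θ = b * algebraMap (𝓞 L) (𝓞 F) t - a * r)
  {σ : Gal(F/L)} (hσ : σ ≠ 1)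

include hθ hσ

omit hab in
lemma s_mul_gal_smul : algebraMap (𝓞 L) (𝓞 F) s * σ • θ =
    b * algebraMap (𝓞 L) (𝓞 F) t + a * r := by
  have hint (n : ℤ) : σ • (n : 𝓞 F) = n := by simpa using gal_smul_algebraMap σ (n : 𝓞 L)
  have hsmul := congrArg (σ • ·) hθ
  simp only [smul_mul', smul_sub, gal_smul_algebraMap, hint, h.gal_smul_r hσ] at hsmul
  rw [hsmul]
  ring

lemma mul_gal_smul_eq_one : θ * σ • θ = 1 := by
  have hab' : (p * a ^ 2 - q * b ^ 2 : 𝓞 F) = -2 := by exact_mod_cast hab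
  refine mul_left_cancel₀ (pow_ne_zero 2 h.s_ne_zero) ?_
  linear_combination hθ * (algebraMap (𝓞 L) (𝓞 F) s * σ • θ) +
    (b * algebraMap (𝓞 L) (𝓞 F) t - a * r) * h.s_mul_gal_smul hθ hσ + b ^ 2 * h.map_t_sq -
    a ^ 2 * h.r_sq + hab' - h.map_s_sq

omit hab in
lemma add_gal_smul_eq : θ + σ • θ = -algebraMap (𝓞 L) (𝓞 F) (b * (s * t)) := by
  refine mul_left_cancel₀ h.s_ne_zero ?_
  rw [map_mul, map_mul, map_intCast]
  linear_combination hθ + h.s_mul_gal_smul hθ hσ + b * algebraMap (𝓞 L) (𝓞 F) t * h.map_s_sq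

lemma exists_span_one_add_sq_eq : ∃ μ : 𝓞 L, IsCoprime μ 2 ∧ Ideal.span {1 + θ} ^ 2 =
    Ideal.span {algebraMap (𝓞 L) (𝓞 F) s} * Ideal.span {algebraMap (𝓞 L) (𝓞 F) μ} := by
  obtain ⟨η, μ, ν, hμ, hμν⟩ := h.toIsBiquad.exists_unit_mul_eq b
  obtain ⟨m, hm⟩ := h.odd_two_sub hab
  have hm' : (2 - q * b ^ 2 : 𝓞 L) = 2 * m + 1 := by exact_mod_cast hm
  refine ⟨μ, ⟨ν, -m, by linear_combination hμν + hm'⟩, ?_⟩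
  have hθθ := h.mul_gal_smul_eq_one hab hθ hσ
  have hadd := h.add_gal_smul_eq hθ hσ
  have hμ' := congrArg (algebraMap (𝓞 L) (𝓞 F)) hμ
  rw [map_sub, map_ofNat, map_mul, map_mul] at hμ'
  have hsq : (1 + θ) ^ 2 = θ * algebraMap (𝓞 L) (𝓞 F) η *
      (algebraMap (𝓞 L) (𝓞 F) s * algebraMap (𝓞 L) (𝓞 F) μ) := by
    linear_combination θ * hadd - hθθ - θ * hμ'
  have hunit : IsUnit (θ * algebraMap (𝓞 L) (𝓞 F) η) :=
    (IsUnit.of_mul_eq_one _ hθθ).mul (η.isUnit.map _)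
  rw [Ideal.span_singleton_pow, hsq, Ideal.span_singleton_mul_left_unit hunit,
    Ideal.span_singleton_mul_span_singleton]

end

lemma exists_idealClass_mul_idealClass_idealOverTwo_eq_one {σ : Gal(F/L)} (hσ : σ ≠ 1) {l : 𝓞 F}
    (hl : algebraMap (𝓞 L) (𝓞 F) s * l = r - 1) :
    ∃ D : Ideal (𝓞 F), D ≠ ⊥ ∧ σ • D = D ∧ idealClass (idealOverTwo s l) * idealClass D = 1 ∧
      ∀ Q : Ideal (𝓞 F), Q.IsPrime → D ≤ Q → 2 ∉ Q := by
  obtain ⟨a, b, hab⟩ := exists_mul_sq_sub_mul_sq_eq_neg_two h.p_prime h.p_mod h.q_prime h.q_mod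
    h.not_isSquare
  obtain ⟨θ, hθ⟩ := h.exists_s_mul_eq_mul_t_sub_mul_r hab
  obtain ⟨μ, hμ, hspan⟩ := h.exists_span_one_add_sq_eq hab hθ hσ
  rw [← h.idealOverTwo_sq hl] at hspan
  obtain ⟨D, hJD, hD⟩ := exists_mul_eq_span_and_sq_eq_span (h.idealOverTwo_ne_bot hl) hspan
  have hD2 (Q : Ideal (𝓞 F)) (hQ : Q ≠ ⊤) (hDQ : D ≤ Q) : 2 ∉ Q := by
    intro h2
    have hμQ : algebraMap (𝓞 L) (𝓞 F) μ ∈ Q := by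
      rw [← Ideal.span_singleton_le_iff_mem, ← hD]
      exact (Ideal.pow_le_self two_ne_zero).trans hDQ
    obtain ⟨u, v, huv⟩ := hμ.map (algebraMap (𝓞 L) (𝓞 F))
    rw [map_ofNat] at huv
    refine hQ ((Ideal.eq_top_iff_one Q).2 ?_)
    rw [← huv]
    exact Q.add_mem (Q.mul_mem_left _ hμQ) (Q.mul_mem_left _ h2)
  have hDbot : D ≠ ⊥ := by
    rintro rfl
    refine hD2 _ (fun htop => ?_) bot_le (h.two_mem_idealOverTwo l)
    have hnorm := h.absNorm_idealOverTwo hl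
    rw [htop, Ideal.absNorm_top] at hnorm
    norm_num at hnorm
  refine ⟨D, hDbot, pow_left_injective two_ne_zero ?_, ?_, fun Q hQ => hD2 Q hQ.ne_top⟩
  · change (σ • D) ^ 2 = D ^ 2
    rw [← smul_pow', hD, smul_span_singleton, gal_smul_algebraMap]
  · rw [← idealClass_mul (h.idealOverTwo_ne_bot hl) hDbot, hJD, idealClass_span_singleton]

end IsTriquad

/-! ### The 2-torsion of the class group -/

lemma eq_one_or_eq_of_mem_closure_pair {G : Type*} [CommGroup G] {a b c : G} (ha : a ^ 2 = 1)
    (hb : b ^ 2 = 1) (hc : c ∈ Subgroup.closure {a, b}) :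
    c = 1 ∨ c = a ∨ c = b ∨ c = a * b := by
  have hzpow {x : G} (hx : x ^ 2 = 1) (n : ℤ) : x ^ n = 1 ∨ x ^ n = x := by
    have hx' : x ^ (2 : ℤ) = 1 := by exact_mod_cast hx
    rcases Int.even_or_odd' n with ⟨k, rfl | rfl⟩
    · exact .inl (by rw [zpow_mul, hx', one_zpow])
    · exact .inr (by rw [zpow_add, zpow_mul, hx', one_zpow, one_mul, zpow_one])
  obtain ⟨m, n, rfl⟩ := Subgroup.mem_closure_pair.1 hc
  rcases hzpow ha m with hm | hm <;> rcases hzpow hb n with hn | hn <;> simp [hm, hn]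

lemma idealClass_pow_natCard_classGroup_sq_of_gal_smul_eq {L F : Type*} [Field L] [NumberField L]
    [Field F] [NumberField F] [Algebra L F] [Algebra.IsQuadraticExtension L F] {σ : Gal(F/L)}
    (hσ : σ ≠ 1) {I : Ideal (𝓞 F)} (hI : I ≠ ⊥) (hs : σ • I = I) :
    (idealClass I ^ Nat.card (ClassGroup (𝓞 L))) ^ 2 = 1 := by
  have hsq := mul_gal_smul_eq_map_relNorm hσ I
  rw [hs] at hsq
  rw [pow_right_comm, sq, ← idealClass_mul hI hI, hsq]
  exact idealClass_map_pow_natCard_classGroup (mt Ideal.relNorm_eq_bot_iff.1 hI)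

namespace IsTriquad

variable {p q : ℕ} {L F : Type*} [Field L] [NumberField L] [Field F] [NumberField F] [Algebra L F]
  [Algebra.IsQuadraticExtension L F] {s t : 𝓞 L} {r : 𝓞 F} (h : IsTriquad p q s t r)

include h

lemma idealOverP_ne_bot (c : ℤ) : idealOverP r (s * t) c ≠ ⊥ :=
  ne_bot_of_le_ne_bot (mt Ideal.span_singleton_eq_bot.1 h.r_ne_zero) le_sup_left

variable {l : 𝓞 F} (hl : algebraMap (𝓞 L) (𝓞 F) s * l = r - 1)

include hl in
lemma primeOverTwo_ne_bot (o : 𝓞 L) : primeOverTwo s l o ≠ ⊥ :=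
  ne_bot_of_le_ne_bot (h.idealOverTwo_ne_bot hl) le_sup_left

variable {c : ℤ} (hc : (p : ℤ) ∣ c ^ 2 - 2 * q) {σ : Gal(F/L)} (hσ : σ ≠ 1)

include hc hσ

section

variable {H : Subgroup (ClassGroup (𝓞 F))} (hP : idealClass (idealOverP r (s * t) c) ∈ H)

include hP

lemma idealClass_mem_of_two_notMem {Q : Ideal (𝓞 F)} (hQ : Q.IsPrime)
    (hx : ∀ x, x - σ • x ∈ Q) (h2Q : 2 ∉ Q) : idealClass Q ∈ H := by
  have hrQ : r ∈ Q := by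
    have hr := hx r
    rw [h.gal_smul_r hσ, sub_neg_eq_add, ← two_mul] at hr
    exact (hQ.mem_or_mem hr).resolve_left h2Q
  rcases h.eq_idealOverP_or_eq_idealOverP_neg hc hQ hrQ with rfl | rfl
  · exact hP
  · rw [← H.mul_mem_cancel_left hP,
      ← idealClass_mul (h.idealOverP_ne_bot c) (h.idealOverP_ne_bot _),
      h.idealOverP_mul_idealOverP_neg hc, idealClass_span_singleton]
    exact H.one_mem

variable (hbase : ∀ J : Ideal (𝓞 L), J ≠ ⊥ → idealClass (J.map (algebraMap (𝓞 L) (𝓞 F))) ∈ H)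
  {o : 𝓞 L} (ho : (2 * o - 1) ^ 2 = -(q : 𝓞 L)) (hT : idealClass (primeOverTwo s l o) ∈ H)

include hl hbase ho hT

lemma idealClass_primeOverTwo_one_sub_mem : idealClass (primeOverTwo s l (1 - o)) ∈ H := by
  obtain ⟨D, hD, hσD, hJD, hD2⟩ := h.exists_idealClass_mul_idealClass_idealOverTwo_eq_one hσ hl
  have hDH : idealClass D ∈ H := idealClass_mem_of_gal_smul_eq hσ H hbase
    (fun Q hQ _ _ hx hDQ => h.idealClass_mem_of_two_notMem hc hσ hP hQ hx (hD2 Q hQ hDQ)) hD hσD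
  rwa [eq_inv_of_mul_eq_one_right hJD, H.inv_mem_iff, ← h.primeOverTwo_mul ho,
    idealClass_mul (h.primeOverTwo_ne_bot hl o) (h.primeOverTwo_ne_bot hl _),
    H.mul_mem_cancel_left hT] at hDH

lemma mem_of_sq_eq_one {C : ClassGroup (𝓞 F)} (hC : C ^ 2 = 1) : C ∈ H := by
  obtain ⟨I, hI, hσI, rfl⟩ := h.unitNormsLift.exists_idealClass_eq_of_sq_eq_one hσ
    h.toIsBiquad.odd_natCard_classGroup hC
  refine idealClass_mem_of_gal_smul_eq hσ H hbase (fun Q hQ _ _ hx _ => ?_) hI hσI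
  by_cases h2Q : 2 ∈ Q
  · rcases h.eq_primeOverTwo_or_eq_primeOverTwo_one_sub hl ho hQ h2Q with rfl | rfl
    exacts [hT, h.idealClass_primeOverTwo_one_sub_mem hl hc hσ hP hbase ho hT]
  · exact h.idealClass_mem_of_two_notMem hc hσ hP hQ hx h2Q

end

/-- The `n`-th power kills the classes of ideals coming from `L` and fixes `C`, as `n` is odd. -/
lemma eq_one_or_eq_of_sq_eq_one (hl : algebraMap (𝓞 L) (𝓞 F) s * l = r - 1) {o : 𝓞 L}
    (ho : (2 * o - 1) ^ 2 = -(q : 𝓞 L)) {n : ℕ} (hn : n = Nat.card (ClassGroup (𝓞 L)))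
    {C : ClassGroup (𝓞 F)} (hC : C ^ 2 = 1) :
    C = 1 ∨ C = idealClass (idealOverP r (s * t) c) ^ n ∨ C = idealClass (primeOverTwo s l o) ^ n ∨
      C = idealClass (idealOverP r (s * t) c) ^ n * idealClass (primeOverTwo s l o) ^ n := by
  subst hn
  set n := Nat.card (ClassGroup (𝓞 L))
  set x := idealClass (idealOverP r (s * t) c)
  set y := idealClass (primeOverTwo s l o)
  let H := (Subgroup.closure {x ^ n, y ^ n}).comap (powMonoidHom n)
  have hmem : C ∈ H := by
    have hxH : x ∈ H := Subgroup.subset_closure (.inl rfl)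
    have hyH : y ∈ H := Subgroup.subset_closure (.inr rfl)
    refine h.mem_of_sq_eq_one hl hc hσ hxH (fun J hJ => ?_) ho hyH hC
    rw [Subgroup.mem_comap, powMonoidHom_apply, idealClass_map_pow_natCard_classGroup hJ]
    exact Subgroup.one_mem _
  rw [Subgroup.mem_comap, powMonoidHom_apply,
    pow_eq_self_of_sq_eq_one h.toIsBiquad.odd_natCard_classGroup hC] at hmem
  exact eq_one_or_eq_of_mem_closure_pair
    (idealClass_pow_natCard_classGroup_sq_of_gal_smul_eq hσ (h.idealOverP_ne_bot c)
      (h.gal_smul_idealOverP hσ c))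
    (idealClass_pow_natCard_classGroup_sq_of_gal_smul_eq hσ (h.primeOverTwo_ne_bot hl o)
      (h.gal_smul_primeOverTwo hl σ o)) hmem

end IsTriquad

/-! ### Ideal classes that are not squares -/

lemma exists_span_mul_eq_of_isSquare_idealClass {R : Type*} [CommRing R] [IsDedekindDomain R]
    {I : Ideal R} (hI : I ≠ ⊥) (h : IsSquare (idealClass I)) :
    ∃ (x y : R) (A : Ideal R), x ≠ 0 ∧ A ≠ ⊥ ∧
      Ideal.span {x} * I = Ideal.span {y} * A ^ 2 := by
  obtain ⟨c, hc⟩ := h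
  obtain ⟨A, hA, rfl⟩ := exists_idealClass_eq c
  rw [← sq, ← idealClass_pow hA, idealClass_eq_iff hI (pow_ne_zero 2 hA)] at hc
  obtain ⟨x, y, hx, -, hxy⟩ := hc
  exact ⟨x, y, A, hx, hA, hxy⟩

lemma isPrincipal_of_span_eq_span_mul_sq {R : Type*} [CommRing R] [IsDedekindDomain R]
    (hodd : Odd (Nat.card (ClassGroup R))) {B : Ideal R} {x y : R} (hx : x ≠ 0) (hB : B ≠ ⊥)
    (h : Ideal.span {x} = Ideal.span {y} * B ^ 2) : B.IsPrincipal := by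
  have hy : Ideal.span {y} ≠ ⊥ := by
    intro hbot
    rw [hbot, Ideal.bot_mul, Ideal.span_singleton_eq_bot] at h
    exact hx h
  have hsq := congrArg idealClass h
  rw [idealClass_mul hy (pow_ne_zero 2 hB), idealClass_span_singleton, idealClass_span_singleton,
    one_mul, idealClass_pow hB] at hsq
  rw [← idealClass_eq_one_iff hB, ← pow_eq_self_of_sq_eq_one hodd hsq.symm, pow_card_eq_one']

section

variable {K F : Type*} [Field K] [NumberField K] [Field F] [NumberField F] [Algebra K F]
  (hodd : Odd (Nat.card (ClassGroup (𝓞 K)))) {I : Ideal (𝓞 F)} {n : 𝓞 K} (hn : n ≠ 0)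
  (hI : Ideal.relNorm (𝓞 K) I = Ideal.span {n}) (hsq : IsSquare (idealClass I))

include hodd hn hI hsq

lemma exists_intNorm_mul_sq_mul_unit_eq : ∃ (x y : 𝓞 F) (β : 𝓞 K) (u : (𝓞 K)ˣ), x ≠ 0 ∧
    Algebra.intNorm (𝓞 K) (𝓞 F) y * β ^ 2 * u = Algebra.intNorm (𝓞 K) (𝓞 F) x * n := by
  have hIbot : I ≠ ⊥ := by
    rwa [Ne, ← Ideal.relNorm_eq_bot_iff (R := 𝓞 K), hI, Ideal.span_singleton_eq_bot]
  obtain ⟨x, y, A, hx, hA, hxy⟩ := exists_span_mul_eq_of_isSquare_idealClass hIbot hsq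
  have hnorm := congrArg (Ideal.relNorm (𝓞 K)) hxy
  rw [map_mul, map_mul, map_pow, hI, Ideal.relNorm_singleton, Ideal.relNorm_singleton,
    Ideal.span_singleton_mul_span_singleton] at hnorm
  obtain ⟨β, hβ⟩ := isPrincipal_of_span_eq_span_mul_sq hodd
    (mul_ne_zero (Algebra.intNorm_ne_zero.2 hx) hn) (mt Ideal.relNorm_eq_bot_iff.1 hA) hnorm
  rw [hβ, Ideal.submodule_span_eq, Ideal.span_singleton_pow,
    Ideal.span_singleton_mul_span_singleton, Ideal.span_singleton_eq_span_singleton] at hnorm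
  obtain ⟨u, hu⟩ := hnorm.symm
  exact ⟨x, y, β, u, hx, hu⟩

lemma exists_norm_mul_sq_eq_or_eq_neg (hunit : ∀ u : (𝓞 K)ˣ, IsSquare u ∨ IsSquare (-u)) :
    ∃ (z : F) (w : K), Algebra.norm K z * w ^ 2 = n ∨ Algebra.norm K z * w ^ 2 = -n := by
  obtain ⟨x, y, β, u, hx, hu⟩ := exists_intNorm_mul_sq_mul_unit_eq hodd hn hI hsq
  have hu' := congrArg (algebraMap (𝓞 K) K) hu
  simp only [map_mul, map_pow, coe_intNorm] at hu'
  have hxF : (x : F) ≠ 0 := RingOfIntegers.coe_ne_zero_iff.2 hx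
  have hdiv : Algebra.norm K ((y : F) / x) * Algebra.norm K (x : F) = Algebra.norm K (y : F) := by
    rw [← map_mul, div_mul_cancel₀ _ hxF]
  have hnorm : Algebra.norm K ((y : F) / x) * (β : K) ^ 2 * ((u : 𝓞 K) : K) = n :=
    mul_left_cancel₀ (Algebra.norm_ne_zero_iff.2 hxF)
      (by linear_combination (β : K) ^ 2 * ((u : 𝓞 K) : K) * hdiv + hu')
  rcases hunit u with hu | hu
  · obtain ⟨v, hv⟩ := isSquare_coe_unit hu
    exact ⟨(y : F) / x, β * v, .inl <| by
      linear_combination hnorm - Algebra.norm K ((y : F) / x) * (β : K) ^ 2 * hv⟩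
  · obtain ⟨v, hv⟩ := isSquare_coe_unit hu
    replace hv : -((u : 𝓞 K) : K) = v * v := by
      rw [← hv, Units.val_neg]
      exact (map_neg (algebraMap (𝓞 K) K) _).symm
    exact ⟨(y : F) / x, β * v, .inr <| by
      linear_combination -hnorm - Algebra.norm K ((y : F) / x) * (β : K) ^ 2 * hv⟩

end

lemma relNorm_rat_eq_span_absNorm {F : Type*} [Field F] [NumberField F] {I : Ideal (𝓞 F)}
    (hI : I ≠ ⊥) : Ideal.relNorm (𝓞 ℚ) I = Ideal.span {(Ideal.absNorm I : 𝓞 ℚ)} := by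
  rw [← Ideal.absNorm_relNorm (𝓞 ℚ) (𝓞 F) I]
  refine (eq_of_le_of_absNorm_dvd_absNorm ?_ ?_ ?_).symm
  · rwa [Ne, Ideal.span_singleton_eq_bot, Nat.cast_eq_zero, Ideal.absNorm_eq_zero_iff,
      Ideal.relNorm_eq_bot_iff]
  · exact (Ideal.span_singleton_le_iff_mem _).2 (Ideal.absNorm_mem _)
  · rw [Ideal.absNorm_span_natCast, RingOfIntegers.rank, Module.finrank_self, pow_one]

lemma eq_span_of_absNorm_eq_sq {K : Type*} [Field K] [NumberField K]
    [Algebra.IsQuadraticExtension ℚ K] {ℓ : ℕ} [Fact ℓ.Prime] {x : 𝓞 K} {n : ℤ} (hx : x ^ 2 = n)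
    (hn : ¬ IsSquare (n : ZMod ℓ)) {J : Ideal (𝓞 K)} (hJ : Ideal.absNorm J = ℓ ^ 2) :
    J = Ideal.span {(ℓ : 𝓞 K)} := by
  have hℓ : ℓ.Prime := Fact.out
  have htop : J ≠ ⊤ := by
    rintro rfl
    rw [Ideal.absNorm_top, eq_comm, Nat.pow_eq_one] at hJ
    exact hℓ.ne_one (hJ.resolve_right two_ne_zero)
  have hbot : J ≠ ⊥ := by
    rintro rfl
    rw [Ideal.absNorm_bot, eq_comm] at hJ
    exact pow_ne_zero 2 hℓ.ne_zero hJ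
  obtain ⟨Q, hQ, hJQ⟩ := Ideal.exists_le_maximal J htop
  have hℓQ : (ℓ : 𝓞 K) ∈ Q := hQ.isPrime.mem_of_pow_mem 2 <| by
    exact_mod_cast hJ ▸ hJQ (Ideal.absNorm_mem J)
  have hJQ' : J = Q := eq_of_le_of_absNorm_dvd_absNorm hbot hJQ
    (hJ ▸ sq_dvd_absNorm_of_not_isSquare hQ.ne_top hℓQ hx hn)
  refine (eq_of_le_of_absNorm_dvd_absNorm ?_ ?_ ?_).symm
  · simpa using hℓ.ne_zero
  · rwa [hJQ', Ideal.span_singleton_le_iff_mem]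
  · rw [Ideal.absNorm_span_natCast, RingOfIntegers.rank, hJ,
      Algebra.IsQuadraticExtension.finrank_eq_two]

namespace IsTriquad

variable {p q : ℕ} {L F : Type*} [Field L] [NumberField L] [Field F] [NumberField F] [Algebra L F]
  [Algebra.IsQuadraticExtension L F] {s t : 𝓞 L} {r : 𝓞 F} (h : IsTriquad p q s t r)

include h

lemma not_isSquare_idealClass_of_absNorm_eq {I : Ideal (𝓞 F)} {m : ℕ} (hm : m ≠ 0)
    (hI : Ideal.absNorm I = 2 * m ^ 2) : ¬ IsSquare (idealClass I) := by
  have := Fact.mk h.p_prime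
  have hn : 2 * m ^ 2 ≠ 0 := mul_ne_zero two_ne_zero (pow_ne_zero 2 hm)
  have hIbot : I ≠ ⊥ := by rwa [Ne, ← Ideal.absNorm_eq_zero_iff, hI]
  intro hsq
  obtain ⟨z, w, hz⟩ := exists_norm_mul_sq_eq_or_eq_neg (K := ℚ)
    (by rw [natCard_classGroup_rat]; exact odd_one) (n := ((2 * m ^ 2 : ℕ) : 𝓞 ℚ))
    (Nat.cast_ne_zero.2 hn) (hI ▸ relNorm_rat_eq_span_absNorm hIbot) hsq
    isSquare_or_isSquare_neg_unit_rat
  obtain ⟨X, Y, hXY⟩ := exists_norm_eq_sq_sub_mul_sq (k := ℚ) (x := (r : F)) (a := -p)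
    (by simpa using h.r_coe_sq) (not_isSquare_rat_neg_prime h.p_prime) z
  have hcast : (((2 * m ^ 2 : ℕ) : 𝓞 ℚ) : ℚ) = 2 * m ^ 2 :=
    (map_natCast (algebraMap (𝓞 ℚ) ℚ) _).trans (by push_cast; rfl)
  rw [hXY, hcast] at hz
  rcases hz with hz | hz
  · have hzp : ((X * w : ℚ) : ℚ_[p]) ^ 2 + p * ((Y * w : ℚ) : ℚ_[p]) ^ 2 = 2 * (m : ℚ_[p]) ^ 2 := by
      have : (X * w) ^ 2 + p * (Y * w) ^ 2 = 2 * (m : ℚ) ^ 2 := by linear_combination hz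
      exact_mod_cast congrArg (Rat.cast : ℚ → ℚ_[p]) this
    exact hm (Nat.cast_eq_zero.1 (_root_.eq_zero_of_sq_add_mul_sq_eq_two_mul_sq
      (by simpa using not_isSquare_two_of_mod_eight_eq_five h.p_mod) hzp))
  · have : 0 ≤ (X * w) ^ 2 + p * (Y * w) ^ 2 := by positivity
    have : 0 < 2 * (m : ℚ) ^ 2 := by positivity
    linarith

lemma t_coe_coe_sq : ((algebraMap (𝓞 L) (𝓞 F) t : 𝓞 F) : F) ^ 2 = algebraMap ℚ F (-q) := by
  simpa using congrArg (algebraMap (𝓞 F) F) h.map_t_sq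

lemma relNorm_adjoin_t_eq_span {I : Ideal (𝓞 F)} (hI : Ideal.absNorm I = p ^ 2) :
    Ideal.relNorm (𝓞 ℚ⟮((algebraMap (𝓞 L) (𝓞 F) t : 𝓞 F) : F)⟯) I = Ideal.span {(p : 𝓞 _)} := by
  have := Fact.mk h.p_prime
  have := isQuadraticExtension_rat_adjoin_of_sq_eq_neg_prime h.q_prime h.t_coe_coe_sq
  have hgen : AdjoinSimple.gen ℚ ((algebraMap (𝓞 L) (𝓞 F) t : 𝓞 F) : F) ^ 2 =
    algebraMap ℚ _ (-q) := Subtype.ext h.t_coe_coe_sq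
  obtain ⟨x, -, hx⟩ := exists_coe_eq_of_sq_eq (c := -q) (by simpa using hgen)
  refine eq_span_of_absNorm_eq_sq hx (fun hq => ?_) (by rw [Ideal.absNorm_relNorm, hI])
  refine not_isSquare_neg_two_of_mod_eight (.inl h.p_mod)
    ((isSquare_mul_iff_of_isSquare h.isSquare_two_mul_q h.two_mul_q_ne_zero).1 ?_)
  obtain ⟨v, hv⟩ := hq
  refine ⟨2 * v, ?_⟩
  push_cast at hv ⊢
  linear_combination 4 * hv

lemma nonempty_ringHom_adjoin_t_padic :
    Nonempty (ℚ⟮((algebraMap (𝓞 L) (𝓞 F) t : 𝓞 F) : F)⟯ →+* ℚ_[2]) := by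
  obtain ⟨c, hc⟩ := exists_padicInt_two_sq_eq_of_mod_eight (n := -q) (by have := h.q_mod; lia)
  have hc' : (c : ℚ_[2]) ^ 2 = ((-q : ℤ) : ℚ_[2]) := by
    rw [← PadicInt.coe_pow, hc, PadicInt.coe_intCast]
  obtain ⟨f⟩ := nonempty_algHom_adjoin_simple_of_sq_eq (E := ℚ_[2]) (c := c) h.t_coe_coe_sq
    (by simpa using hc')
  exact ⟨f⟩

lemma not_isSquare_idealClass_of_absNorm_eq_sq {I : Ideal (𝓞 F)} (hI : Ideal.absNorm I = p ^ 2) :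
    ¬ IsSquare (idealClass I) := by
  obtain ⟨f⟩ := h.nonempty_ringHom_adjoin_t_padic
  have hs := not_isSquare_neg_prime_adjoin_of_sq_eq_neg_prime h.q_prime h.t_coe_coe_sq
    Nat.prime_two (by have := h.q_mod; lia)
  have hp := not_isSquare_neg_prime_adjoin_of_sq_eq_neg_prime h.q_prime h.t_coe_coe_sq
    h.p_prime h.p_ne_q.symm
  have hrel := h.relNorm_adjoin_t_eq_span hI
  have hodd := odd_natCard_classGroup_adjoin_of_sq_eq_neg_prime h.q_prime h.t_coe_coe_sq
    (.inr (by have := h.q_mod; lia))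
  have hunit := isSquare_or_isSquare_neg_unit_adjoin_of_sq_eq_neg_prime h.q_prime h.t_coe_coe_sq
  set K := ℚ⟮((algebraMap (𝓞 L) (𝓞 F) t : 𝓞 F) : F)⟯
  intro hsq
  obtain ⟨z, w, hz | hz⟩ := exists_norm_mul_sq_eq_or_eq_neg hodd
    (Nat.cast_ne_zero.2 h.p_prime.ne_zero) hrel hsq hunit
  · obtain ⟨X, Y, hXY⟩ := exists_norm_eq_sq_sub_mul_sq (k := K) (a := -2)
      (x := ((algebraMap (𝓞 L) (𝓞 F) s : 𝓞 F) : F))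
      (by rw [h.s_coe_coe_sq, map_neg, map_ofNat]) (by simpa using hs) z
    have hf := congrArg f hz
    simp only [hXY, map_mul, map_sub, map_neg, map_pow, map_ofNat, map_natCast] at hf
    exact one_ne_zero (eq_zero_of_sq_add_two_mul_sq_eq_mul_sq h.p_mod (x := f (X * w))
      (y := f (Y * w)) (z := 1) (by simp only [map_mul]; linear_combination hf))
  · obtain ⟨X, Y, hXY⟩ := exists_norm_eq_sq_sub_mul_sq (k := K) (a := -p) (x := (r : F))
      (by simpa using h.r_coe_sq) hp z
    have hf := congrArg f hz
    simp only [hXY, map_mul, map_sub, map_neg, map_pow, map_natCast] at hf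
    exact one_ne_zero (eq_zero_of_sq_add_mul_sq_eq_neg_mul_sq h.p_mod (x := f (X * w))
      (y := f (Y * w)) (z := 1) (by simp only [map_mul]; linear_combination hf))

end IsTriquad

/-! ### The 2-class group -/

section

variable {G : Type*} [CommGroup G]

lemma not_isSquare_pow_of_odd {a : G} (ha : ¬ IsSquare a) {n : ℕ} (hn : Odd n) :
    ¬ IsSquare (a ^ n) := by
  rintro ⟨c, hc⟩
  obtain ⟨k, rfl⟩ := hn
  refine ha ⟨c * (a ^ k)⁻¹, ?_⟩
  rw [mul_mul_mul_comm, ← hc, pow_succ, two_mul, pow_add, ← mul_inv, mul_inv_cancel_comm]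

lemma pow_eq_one_of_pow_pow_eq_one {M : Type*} [Monoid M] {ℓ : ℕ}
    (h : ∀ c : M, (c ^ ℓ) ^ ℓ = 1 → c ^ ℓ = 1) {k : ℕ} {c : M} (hc : c ^ ℓ ^ k = 1) :
    c ^ ℓ = 1 := by
  induction k generalizing c with
  | zero => rw [pow_zero, pow_one] at hc; rw [hc, one_pow]
  | succ k ih => exact h c (ih (by rwa [pow_succ', pow_mul] at hc))

lemma mem_sylow_iff_pow_eq_one [Finite G] {ℓ : ℕ} [Fact ℓ.Prime]
    (h : ∀ c : G, (c ^ ℓ) ^ ℓ = 1 → c ^ ℓ = 1) (S : Sylow ℓ G) {c : G} :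
    c ∈ S ↔ c ^ ℓ = 1 := by
  constructor
  · intro hc
    obtain ⟨k, hk⟩ := S.isPGroup' ⟨c, hc⟩
    exact pow_eq_one_of_pow_pow_eq_one h (congrArg Subtype.val hk)
  · intro hc
    have hcard : Nat.card (Subgroup.zpowers c) ∣ ℓ ^ 1 := by
      rw [Nat.card_zpowers, pow_one]
      exact orderOf_dvd_of_pow_eq_one hc
    obtain ⟨Q, hQ⟩ := (IsPGroup.of_card_dvd_pow hcard).exists_le_sylow
    have := Sylow.unique_of_normal S inferInstance
    rw [Subsingleton.elim S Q]
    exact hQ (Subgroup.mem_zpowers c)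

lemma isKleinFour_of_mem_iff {H : Subgroup G} {a b : G} (ha : a ^ 2 = 1) (hb : b ^ 2 = 1)
    (ha1 : a ≠ 1) (hb1 : b ≠ 1) (hab : a ≠ b)
    (hH : ∀ c, c ∈ H ↔ c = 1 ∨ c = a ∨ c = b ∨ c = a * b) : IsKleinFour H := by
  have hset : (H : Set G) = {1, a, b, a * b} := by
    ext c
    simpa using hH c
  have hab1 : a * b ≠ 1 := fun hab1 => hab (by
    rw [eq_inv_of_mul_eq_one_left hab1, inv_eq_of_mul_eq_one_left (sq b ▸ hb)])
  have hcard : Nat.card H = 4 := by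
    classical
    have hfin : ({1, a, b, a * b} : Set G) = (({1, a, b, a * b} : Finset G) : Set G) := by simp
    rw [← SetLike.coe_sort_coe, Nat.card_coe_set_eq, hset, hfin, Set.ncard_coe_finset]
    simp [Finset.card_insert_of_notMem, ha1.symm, hb1.symm, hab1.symm, hab, ha1, hb1]
  have : Finite H := Nat.finite_of_card_ne_zero (by rw [hcard]; norm_num)
  have : Nontrivial H := Finite.one_lt_card_iff_nontrivial.1 (by rw [hcard]; norm_num)
  refine ⟨hcard, (Monoid.exponent_eq_prime_iff Nat.prime_two).2 fun c hc => ?_⟩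
  refine orderOf_eq_prime (Subtype.ext ?_) hc
  change (c : G) ^ 2 = 1
  rcases (hH c).1 c.2 with hc | hc | hc | hc <;> simp [hc, ha, hb, mul_pow]

lemma sylow_two_mulEquiv_of_not_isSquare [Finite G] (S : Sylow 2 G) {a b : G} (ha : a ^ 2 = 1)
    (hb : b ^ 2 = 1) (htwo : ∀ c : G, c ^ 2 = 1 → c = 1 ∨ c = a ∨ c = b ∨ c = a * b)
    (hna : ¬ IsSquare a) (hnb : ¬ IsSquare b) (hnab : ¬ IsSquare (a * b)) :
    Nonempty (S ≃* Multiplicative (ZMod 2 × ZMod 2)) := by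
  have hsq (c : G) (hc : (c ^ 2) ^ 2 = 1) : c ^ 2 = 1 := by
    have hsquare : IsSquare (c ^ 2) := IsSquare.sq c
    rcases htwo _ hc with hc | hc | hc | hc
    · exact hc
    · exact absurd (hc ▸ hsquare) hna
    · exact absurd (hc ▸ hsquare) hnb
    · exact absurd (hc ▸ hsquare) hnab
  have hne {c : G} (hc : ¬ IsSquare c) : c ≠ 1 := fun hc1 => hc (hc1 ▸ IsSquare.one)
  have hab : a ≠ b := fun hab => hnab ⟨a, by rw [hab]⟩
  have : IsKleinFour S := isKleinFour_of_mem_iff ha hb (hne hna) (hne hnb) hab fun c => by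
    refine (mem_sylow_iff_pow_eq_one hsq S).trans ⟨htwo c, ?_⟩
    rintro (rfl | rfl | rfl | rfl) <;> simp [ha, hb, mul_pow]
  exact IsKleinFour.nonempty_mulEquiv

end

namespace IsTriquad

variable {p q : ℕ} {L F : Type*} [Field L] [NumberField L] [Field F] [NumberField F] [Algebra L F]
  [Algebra.IsQuadraticExtension L F] {s t : 𝓞 L} {r : 𝓞 F} (h : IsTriquad p q s t r)

include h

lemma exists_dvd_sq_sub_two_mul_q : ∃ c : ℤ, (p : ℤ) ∣ c ^ 2 - 2 * q := by
  have := Fact.mk h.p_prime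
  obtain ⟨x, hx⟩ := h.isSquare_two_mul_q
  obtain ⟨c, rfl⟩ := ZMod.intCast_surjective x
  refine ⟨c, (ZMod.intCast_eq_intCast_iff_dvd_sub _ _ p).1 ?_⟩
  rw [hx, Int.cast_pow, sq]

lemma nonempty_mulEquiv (S : Sylow 2 (ClassGroup (𝓞 F))) :
    Nonempty (S ≃* Multiplicative (ZMod 2 × ZMod 2)) := by
  obtain ⟨σ, hσ⟩ := exists_gal_ne_one L F
  obtain ⟨c, hc⟩ := h.exists_dvd_sq_sub_two_mul_q
  obtain ⟨o, ho⟩ : ∃ o : 𝓞 L, (2 * o - 1) ^ 2 = -(q : 𝓞 L) := by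
    obtain ⟨o, ho⟩ := exists_two_mul_eq_one_add (by have := h.q_mod; lia) h.t_sq
    exact ⟨o, by rw [ho, add_sub_cancel_left, h.t_sq]⟩
  obtain ⟨l, hl⟩ := h.exists_s_mul_eq_r_sub_one
  have hodd := h.toIsBiquad.odd_natCard_classGroup
  have hP := h.absNorm_idealOverP hc
  have hT := h.absNorm_primeOverTwo hl ho
  have hP0 := h.idealOverP_ne_bot c
  have hT0 := h.primeOverTwo_ne_bot hl o
  refine sylow_two_mulEquiv_of_not_isSquare S
    (idealClass_pow_natCard_classGroup_sq_of_gal_smul_eq hσ hP0 (h.gal_smul_idealOverP hσ c))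
    (idealClass_pow_natCard_classGroup_sq_of_gal_smul_eq hσ hT0 (h.gal_smul_primeOverTwo hl σ o))
    (fun C hC => h.eq_one_or_eq_of_sq_eq_one hc hσ hl ho rfl hC)
    (not_isSquare_pow_of_odd (h.not_isSquare_idealClass_of_absNorm_eq_sq hP) hodd)
    (not_isSquare_pow_of_odd (h.not_isSquare_idealClass_of_absNorm_eq one_ne_zero ?_) hodd) ?_
  · rw [hT, one_pow, mul_one]
  · rw [← mul_pow, ← idealClass_mul hP0 hT0]
    refine not_isSquare_pow_of_odd
      (h.not_isSquare_idealClass_of_absNorm_eq h.p_prime.ne_zero ?_) hodd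
    rw [map_mul, hP, hT, mul_comm]

end IsTriquad

/-! ### The field of the theorem -/

section

variable {F : Type*} [Field F] [NumberField F] {p q : ℕ} {s t r : F}

lemma exists_isBiquad_adjoin (hq : q.Prime) (hq8 : q % 8 = 7) (hs : s ^ 2 = -2)
    (ht : t ^ 2 = -q) : ∃ s' t' : 𝓞 ℚ⟮s⟯⟮t⟯, IsBiquad q s' t' := by
  have hsQ : s ^ 2 = algebraMap ℚ F (-(2 : ℕ)) := by
    rw [hs, map_neg, map_natCast, Nat.cast_ofNat]
  have hK := isQuadraticExtension_rat_adjoin_of_sq_eq_neg_prime Nat.prime_two hsQ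
  have hL : Algebra.IsQuadraticExtension ℚ⟮s⟯ ℚ⟮s⟯⟮t⟯ :=
    isQuadraticExtension_adjoin_simple_of_sq_eq (a := (-q : ℚ⟮s⟯)) (by simpa using ht)
      (not_isSquare_neg_prime_adjoin_of_sq_eq_neg_prime Nat.prime_two hsQ hq (by lia))
  obtain ⟨s', -, hs'⟩ := exists_coe_eq_of_sq_eq (c := -2)
    (x := algebraMap ℚ⟮s⟯ ℚ⟮s⟯⟮t⟯ (AdjoinSimple.gen ℚ s))
    (by rw [Int.cast_neg, Int.cast_ofNat]; exact Subtype.ext hs)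
  obtain ⟨t', -, ht'⟩ := exists_coe_eq_of_sq_eq (c := -q) (x := AdjoinSimple.gen ℚ⟮s⟯ t)
    (Subtype.ext (by simpa using ht))
  refine ⟨s', t', hq, hq8, by simpa using hs', by simpa using ht', ?_⟩
  rw [← Module.finrank_mul_finrank ℚ ℚ⟮s⟯, hK.finrank_eq_two, hL.finrank_eq_two]

lemma adjoin_adjoin_adjoin_simple_eq_top {k M : Type*} [Field k] [Field M] [Algebra k M]
    {x y z : M} (h : adjoin k {x, y, z} = ⊤) : k⟮x⟯⟮y⟯⟮z⟯ = ⊤ := by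
  have hle : adjoin k {x, y, z} ≤ (k⟮x⟯⟮y⟯⟮z⟯.restrictScalars k⟮x⟯).restrictScalars k := by
    rw [adjoin_le_iff]
    rintro w (rfl | rfl | rfl)
    · exact IntermediateField.algebraMap_mem k⟮w⟯⟮y⟯⟮z⟯
        (algebraMap k⟮w⟯ k⟮w⟯⟮y⟯ (AdjoinSimple.gen k w))
    · exact IntermediateField.algebraMap_mem k⟮x⟯⟮w⟯⟮z⟯ (AdjoinSimple.gen k⟮x⟯ w)
    · exact mem_adjoin_simple_self k⟮x⟯⟮y⟯ w
  exact eq_top_iff.2 fun w _ => hle (h ▸ mem_top)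

lemma nonempty_sylow_two_classGroup_mulEquiv (hp : p.Prime) (hq : q.Prime) (hp8 : p % 8 = 5)
    (hq8 : q % 8 = 7) (hpq : ¬ IsSquare (p : ZMod q)) (hs : s ^ 2 = -2) (ht : t ^ 2 = -q)
    (hr : r ^ 2 = -p) (hgen : adjoin ℚ {s, t, r} = ⊤) (S : Sylow 2 (ClassGroup (𝓞 F))) :
    Nonempty (S ≃* Multiplicative (ZMod 2 × ZMod 2)) := by
  obtain ⟨s', t', h⟩ := exists_isBiquad_adjoin hq hq8 hs ht
  have hF : Algebra.IsQuadraticExtension ℚ⟮s⟯⟮t⟯ F := by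
    have hLr := isQuadraticExtension_adjoin_simple_of_sq_eq (a := (-p : ℚ⟮s⟯⟮t⟯))
      (by rw [hr, map_neg, map_natCast]) (h.not_isSquare_neg_prime hp (by lia) (by lia))
    rw [adjoin_adjoin_adjoin_simple_eq_top hgen] at hLr
    exact ⟨by rw [← finrank_top', hLr.finrank_eq_two]⟩
  obtain ⟨r', -, hr'⟩ := exists_coe_eq_of_sq_eq (c := -p) (x := r) (by simpa using hr)
  have h' : IsTriquad p q s' t' r' :=
    { h with p_prime := hp, p_mod := hp8, not_isSquare := hpq, r_sq := by simpa using hr' }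
  exact h'.nonempty_mulEquiv S

end

lemma sqrt_two_mul_coe_sq (n : ℕ) : ((Real.sqrt (2 * n) : ℝ) : ℂ) ^ 2 = 2 * n := by
  rw [← Complex.ofReal_pow, Real.sq_sqrt (by positivity)]
  simp

lemma I_mul_sqrt_two_sq : (Complex.I * ((Real.sqrt 2 : ℝ) : ℂ)) ^ 2 = -2 := by
  have := sqrt_two_mul_coe_sq 1
  rw [mul_pow, Complex.I_sq, neg_one_mul, neg_inj]
  simpa using this

lemma Ff.exists_generators (p q : ℕ) : ∃ s t r : Ff p q,
    s ^ 2 = -2 ∧ t ^ 2 = -q ∧ r ^ 2 = -p ∧ adjoin ℚ {s, t, r} = ⊤ := by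
  let a : Ff p q := ⟨_, subset_adjoin ℚ _ (.inl rfl)⟩
  let b : Ff p q := ⟨_, subset_adjoin ℚ _ (.inr (.inl rfl))⟩
  let s : Ff p q := ⟨_, subset_adjoin ℚ _ (.inr (.inr rfl))⟩
  have ha : a ^ 2 = 2 * p := Subtype.ext (sqrt_two_mul_coe_sq p)
  have hb : b ^ 2 = 2 * q := Subtype.ext (sqrt_two_mul_coe_sq q)
  have hs : s ^ 2 = -2 := Subtype.ext I_mul_sqrt_two_sq
  refine ⟨s, b * s / 2, a * s / 2, hs, by linear_combination (s ^ 2 / 4) * hb + (q / 2) * hs,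
    by linear_combination (s ^ 2 / 4) * ha + (p / 2) * hs, ?_⟩
  set E := adjoin ℚ {s, b * s / 2, a * s / 2}
  have hsE : s ∈ E := subset_adjoin ℚ _ (.inl rfl)
  have hE (c : Ff p q) (hc : c * s / 2 ∈ E) : c ∈ E := by
    rw [show c = -(c * s / 2 * s) by linear_combination (c / 2) * hs]
    exact neg_mem (mul_mem hc hsE)
  have hle : Ff p q ≤ lift E := adjoin_le_iff.2 <| by
    rintro x (rfl | rfl | rfl)
    · exact (mem_lift a).2 (hE a (subset_adjoin ℚ _ (.inr (.inr rfl))))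
    · exact (mem_lift b).2 (hE b (subset_adjoin ℚ _ (.inr (.inl rfl))))
    · exact (mem_lift s).2 hsE
  exact eq_top_iff.2 fun z _ => (mem_lift z).1 (hle z.2)

lemma mod_eight_eq_of_jacobiSym_two_eq_neg_one {p : ℕ} (hp : p % 4 = 1)
    (h : jacobiSym 2 p = -1) : p % 8 = 5 := by
  rw [jacobiSym.at_two (Nat.odd_iff.2 (by lia)), ZMod.χ₈_nat_eq_if_mod_eight] at h
  grind

lemma mod_eight_eq_of_jacobiSym_two_eq_one {q : ℕ} (hq : q % 4 = 3)
    (h : jacobiSym 2 q = 1) : q % 8 = 7 := by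
  rw [jacobiSym.at_two (Nat.odd_iff.2 (by lia)), ZMod.χ₈_nat_eq_if_mod_eight] at h
  grind

theorem statement7 (p q : ℕ) (h : Cond1 p q) [NumberField ↥(Ff p q)]
    (P : Sylow 2 (ClassGroup (𝓞 ↥(Ff p q)))) :
    Nonempty (↥(P : Subgroup (ClassGroup (𝓞 ↥(Ff p q)))) ≃*
      Multiplicative (ZMod 2 × ZMod 2)) := by
  obtain ⟨hp, hq, hp4, hq4, h2p, h2q, hpq⟩ := h
  have hp8 : p % 8 = 5 := mod_eight_eq_of_jacobiSym_two_eq_neg_one hp4 h2p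
  have hq8 : q % 8 = 7 := mod_eight_eq_of_jacobiSym_two_eq_one hq4 h2q
  have hns : ¬ IsSquare (p : ZMod q) := by
    simpa using ZMod.nonsquare_of_jacobiSym_eq_neg_one hpq
  obtain ⟨s, t, r, hs, ht, hr, hgen⟩ := Ff.exists_generators p q
  exact nonempty_sylow_two_classGroup_mulEquiv hp hq hp8 hq8 hns hs ht hr hgen P
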